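/- There is a constant q₀ depending only on n such that the following holds whenever q ≥ q₀: if 𝓕 is a ratio-sharp EKR-set of chambers, then there exists s ∈ [n] such that for every chamber C ∈ 𝓕 the s-space C_s is heavy with respect to 𝓕. -/

import Mathlib

open scoped Classical

open Module

section Defs

variable {F V : Type} [Field F] [AddCommGroup V] [Module F V]

/-- The orthogonal complement of a subspace with respect to a bilinear form. -/
def bperp (B : V →ₗ[F] V →ₗ[F] F) (W : Submodule F V) : Submodule F V :=
  ⨅ w ∈ W, LinearMap.ker (B w)

/-- A subspace is totally isotropic for `B`. -/
def IsTotIso (B : V →ₗ[F] V →ₗ[F] F) (W : Submodule F V) : Prop :=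
  ∀ u ∈ W, ∀ w ∈ W, B u w = 0

/-- `B` is an alternating form. -/
def IsAltForm (B : V →ₗ[F] V →ₗ[F] F) : Prop := ∀ v, B v v = 0

/-- `B` is nondegenerate. -/
def NondegForm (B : V →ₗ[F] V →ₗ[F] F) : Prop := ∀ v, (∀ w, B v w = 0) → v = 0

/-- A flag of type `J` of totally isotropic subspaces: entries outside `J` are `⊥`. -/
structure SFlag (B : V →ₗ[F] V →ₗ[F] F) (J : Finset ℕ) where
  space : ℕ → Submodule F V
  isotropic : ∀ i ∈ J, IsTotIso B (space i)
  finrank_eq : ∀ i ∈ J, Module.finrank F (space i) = i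
  mono : ∀ i ∈ J, ∀ j ∈ J, i ≤ j → space i ≤ space j
  eq_bot : ∀ i, i ∉ J → space i = ⊥

/-- Two flags of type `J` are opposite. -/
def FlagOpp {B : V →ₗ[F] V →ₗ[F] F} {J : Finset ℕ} (C C' : SFlag B J) : Prop :=
  ∀ i ∈ J, bperp B (C.space i) ⊓ C'.space i = ⊥

/-- An EKR-set of flags of type `J`: no two members are opposite. -/
def IsEKRFlags {B : V →ₗ[F] V →ₗ[F] F} {J : Finset ℕ} (𝓕 : Set (SFlag B J)) : Prop :=
  ∀ C ∈ 𝓕, ∀ C' ∈ 𝓕, ¬ FlagOpp C C'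

/-- Two subspaces are opposite. -/
def SpaceOpp (B : V →ₗ[F] V →ₗ[F] F) (S T : Submodule F V) : Prop :=
  bperp B S ⊓ T = ⊥

/-- An EKR-set of totally isotropic `s`-spaces: no two members are opposite. -/
def IsEKRSpaces (B : V →ₗ[F] V →ₗ[F] F) (s : ℕ) (𝓕 : Set (Submodule F V)) : Prop :=
  (∀ S ∈ 𝓕, IsTotIso B S ∧ Module.finrank F S = s) ∧
    ∀ S ∈ 𝓕, ∀ T ∈ 𝓕, ¬ SpaceOpp B S T

/-- An `s`-space `S` is heavy with respect to a set `𝓕` of flags: every flag whose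
`s`-th entry equals `S` belongs to `𝓕`. -/
def Heavy {B : V →ₗ[F] V →ₗ[F] F} {J : Finset ℕ} (𝓕 : Set (SFlag B J)) (s : ℕ)
    (S : Submodule F V) : Prop :=
  ∀ C : SFlag B J, C.space s = S → C ∈ 𝓕

end Defs

/-- `z_k = ∏_{i=1}^k (q^i-1)/(q-1)`. -/
noncomputable def zpol (q k : ℕ) : ℝ :=
  ∏ i ∈ Finset.Icc 1 k, ((q : ℝ) ^ i - 1) / ((q : ℝ) - 1)

/-- The Gaussian binomial coefficient `[m choose k]_q` as a real number. -/
noncomputable def gaussq (q m k : ℕ) : ℝ :=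
  ∏ i ∈ Finset.Icc 1 k, ((q : ℝ) ^ (m - k + i) - 1) / ((q : ℝ) ^ i - 1)

/-- `Φ_m^s` in `PS(n,1,q)`: the number of totally isotropic `s`-spaces containing a
fixed totally isotropic `m`-space. -/
noncomputable def PhiP (q n m s : ℕ) : ℝ :=
  gaussq q (n - m) (s - m) * ∏ i ∈ Finset.Icc 1 (s - m), ((q : ℝ) ^ (n - m + 1 - i) + 1)

/-!
Let `A` be the opposition matrix of the chambers and let `T i` be the adjacency matrix of the panels
of type `i`, so that `(T i + 1) (T i - q) = 0`. As `A` is the product of the `T i` along a reduced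
word of the longest Weyl group element, in which each of the `N` generators occurs `r` times,
determinants on the `d`-dimensional eigenspace of `A` for an eigenvalue `lam` satisfy
`|lam| ^ d = ∏ i, |det (T i)| ^ r`. Away from the constant functions, `x ↦ (T i x - q x) i` is an
injection of the eigenspace into the product of the `(-1)`-eigenspaces of the `T i`; hence
`|lam| * q ^ r ≤ q ^ (N * r)`, and in the case of equality every eigenvector is a sum `∑ i, g i` in
which `g i` is constant on all panels of type different from `i`.

The Hoffman bound for cocliques with this value of the least eigenvalue is `|𝓕| (q ^ r + 1) ≤ |X|`,
so for a ratio-sharp `𝓕` the indicator function is such a sum up to a constant. A level set of `g i`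
outside `𝓕` misses, from each of its members, at most one chamber in every panel; for large `q` it
therefore contains more than half of all chambers. So `g i` has a single value `a i` outside `𝓕`
and, by the eigenvector equation for `A`, the value `-q ^ r * a i` on `𝓕`. If `a s ≠ 0`, then `𝓕` is
a union of panels of every type `j ≠ s`, and these connect any two chambers with the same `s`-space.
-/

section Hecke

/-- The quadratic relation `(T + 1)(T - q) = 0` of a standard generator of an Iwahori–Hecke algebra
with parameter `q`. -/
def IsHecke {R A : Type*} [CommRing R] [Ring A] [Algebra R A] (q : R) (T : A) : Prop :=
  (T + 1) * (T - q • 1) = 0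

theorem IsHecke.map {R A A' : Type*} [CommRing R] [Ring A] [Algebra R A] [Ring A'] [Algebra R A']
    {q : R} {T : A} (hT : IsHecke q T) (f : A →ₐ[R] A') : IsHecke q (f T) := by
  simpa only [IsHecke, map_mul, map_add, map_sub, map_smul, map_one, map_zero] using congrArg f hT

variable {K E : Type*} [Field K] [AddCommGroup E] [Module K E]

theorem IsHecke.sub_smul_mem_ker {q : K} {T : End K E} (hT : IsHecke q T) (x : E) :
    (T - q • 1) x ∈ LinearMap.ker (T + 1) :=
  LinearMap.congr_fun hT x

theorem IsHecke.restrict {q : K} {T : End K E} (hT : IsHecke q T) {p : Submodule K E}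
    (hp : ∀ x ∈ p, T x ∈ p) : IsHecke q (T.restrict hp) :=
  LinearMap.ext fun x => Subtype.ext (LinearMap.congr_fun hT (x : E))

theorem IsHecke.det_mul_pow_finrank [FiniteDimensional K E] {q : K} {T : End K E}
    (hT : IsHecke q T) :
    LinearMap.det T * q ^ finrank K (LinearMap.ker (T + 1)) =
      (-1) ^ finrank K (LinearMap.ker (T + 1)) * q ^ finrank K E := by
  set N := LinearMap.ker (T + 1)
  have mem_N {x : E} : x ∈ N ↔ T x = -x := by
    rw [LinearMap.mem_ker, LinearMap.add_apply, End.one_apply, ← eq_neg_iff_add_eq_zero]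
  have hN : ∀ x ∈ N, T x ∈ N := fun x hx => by
    rw [mem_N.1 hx]
    exact N.neg_mem hx
  have restrict_eq : T.restrict hN = (-1 : K) • LinearMap.id := by
    ext x
    simpa using mem_N.1 x.2
  have mapQ_eq : N.mapQ N T hN = q • LinearMap.id := by
    ext x
    simpa [sub_eq_zero] using (Submodule.Quotient.mk_eq_zero N).2 (hT.sub_smul_mem_ker x)
  rw [LinearMap.det_eq_det_mul_det N T hN, restrict_eq, mapQ_eq, LinearMap.det_smul,
    LinearMap.det_smul, LinearMap.det_id, LinearMap.det_id, mul_one, mul_one, mul_assoc, ← pow_add,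
    Submodule.finrank_quotient_add_finrank]

variable {ι : Type*} {q : K} {T : ι → End K E}

/-- The map `x ↦ (T i x - q x)ᵢ`, whose kernel consists of the common `q`-eigenvectors of the
`T i`. -/
def heckeDefect (hT : ∀ i, IsHecke q (T i)) : E →ₗ[K] ∀ i, LinearMap.ker (T i + 1) :=
  LinearMap.pi fun i => (T i - q • 1).codRestrict _ (hT i).sub_smul_mem_ker

theorem heckeDefect_apply_eq_zero {hT : ∀ i, IsHecke q (T i)} {x : E} {i : ι} :
    heckeDefect hT x i = 0 ↔ T i x = q • x := by
  rw [← Subtype.coe_inj]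
  exact sub_eq_zero

theorem heckeDefect_injective (hT : ∀ i, IsHecke q (T i))
    (hfix : ∀ x, (∀ i, T i x = q • x) → x = 0) : Function.Injective (heckeDefect hT) :=
  (injective_iff_map_eq_zero _).2 fun x hx =>
    hfix x fun i => heckeDefect_apply_eq_zero.1 (congrFun hx i)

variable [Fintype ι]

theorem det_list_prod_map_of_count_eq [DecidableEq ι] {l : List ι} {r : ℕ}
    (hl : ∀ i, l.count i = r) :
    LinearMap.det (l.map T).prod = (∏ i, LinearMap.det (T i)) ^ r := by
  rw [map_list_prod, List.map_map, Finset.prod_list_map_count, ← Finset.prod_pow]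
  simp only [hl, Function.comp_apply]
  refine Finset.prod_subset (Finset.subset_univ _) fun i _ hi => ?_
  rw [← hl i, List.count_eq_zero_of_not_mem (by simpa using hi), pow_zero]

variable [FiniteDimensional K E]

theorem finrank_le_sum_finrank_ker_add_one (hT : ∀ i, IsHecke q (T i))
    (hfix : ∀ x, (∀ i, T i x = q • x) → x = 0) :
    finrank K E ≤ ∑ i, finrank K (LinearMap.ker (T i + 1)) := by
  rw [← finrank_pi_fintype]
  exact LinearMap.finrank_le_finrank_of_injective (heckeDefect_injective hT hfix)

theorem exists_eq_sum_of_sum_finrank_ker_add_one_eq (hT : ∀ i, IsHecke q (T i))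
    (hfix : ∀ x, (∀ i, T i x = q • x) → x = 0)
    (hsum : ∑ i, finrank K (LinearMap.ker (T i + 1)) = finrank K E) (v : E) :
    ∃ g : ι → E, v = ∑ i, g i ∧ ∀ i j, j ≠ i → T j (g i) = q • g i := by
  have hinj := heckeDefect_injective hT hfix
  have hsurj : Function.Surjective (heckeDefect hT) :=
    (LinearMap.injective_iff_surjective_of_finrank_eq_finrank
      ((finrank_pi_fintype K).trans hsum).symm).1 hinj
  choose g hg using fun i => hsurj (Pi.single i (heckeDefect hT v i))
  refine ⟨g, hinj ?_, fun i j hji => (heckeDefect_apply_eq_zero (hT := hT)).1 ?_⟩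
  · rw [map_sum, Finset.sum_congr rfl fun i _ => hg i]
    exact (Finset.univ_sum_single _).symm
  · rw [hg, Pi.single_eq_of_ne hji]

end Hecke

section RealHecke

variable {E ι : Type*} [AddCommGroup E] [Module ℝ E] [FiniteDimensional ℝ E] [DecidableEq ι]
  {q c : ℝ} {T : ι → End ℝ E} {l : List ι} {r : ℕ}

theorem abs_pow_finrank_mul_pow [Fintype ι] (hT : ∀ i, IsHecke q (T i)) (hq : 0 < q)
    (hl : ∀ i, l.count i = r) (hc : (l.map T).prod = c • 1) :
    |c| ^ finrank ℝ E * q ^ (r * ∑ i, finrank ℝ (LinearMap.ker (T i + 1))) =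
      (q ^ l.length) ^ finrank ℝ E := by
  have hdet : |c| ^ finrank ℝ E = (∏ i, |LinearMap.det (T i)|) ^ r := by
    rw [← Finset.abs_prod, ← abs_pow, ← abs_pow, ← det_list_prod_map_of_count_eq hl, hc,
      LinearMap.det_smul, map_one, mul_one]
  have hdet_i (i : ι) : |LinearMap.det (T i)| * q ^ finrank ℝ (LinearMap.ker (T i + 1)) =
      q ^ finrank ℝ E := by
    simpa [abs_mul, abs_of_pos hq] using congrArg abs (hT i).det_mul_pow_finrank
  have hlength : l.length = r * Fintype.card ι := by
    rw [← Multiset.coe_card, ← Multiset.sum_count_eq_card (fun _ _ => Finset.mem_univ _)]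
    simp [hl, mul_comm]
  rw [hdet, pow_mul', ← Finset.prod_pow_eq_pow_sum, ← mul_pow, ← Finset.prod_mul_distrib,
    Finset.prod_congr rfl fun i _ => hdet_i i, Finset.prod_const, Finset.card_univ, hlength]
  ring

theorem exists_eq_sum_of_abs_mul_pow_eq [Fintype ι] (hT : ∀ i, IsHecke q (T i)) (hq : 1 < q)
    (hfix : ∀ x, (∀ i, T i x = q • x) → x = 0) (hr : 0 < r) (hl : ∀ i, l.count i = r)
    (hc : (l.map T).prod = c • 1) (hcq : |c| * q ^ r = q ^ l.length) (v : E) :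
    ∃ g : ι → E, v = ∑ i, g i ∧ ∀ i j, j ≠ i → T j (g i) = q • g i := by
  have hq0 : 0 < q := by positivity
  have hc0 : |c| ≠ 0 := fun h => by
    rw [h, zero_mul] at hcq
    exact (pow_pos hq0 _).ne hcq
  refine exists_eq_sum_of_sum_finrank_ker_add_one_eq hT hfix ?_ v
  have h := abs_pow_finrank_mul_pow hT hq0 hl hc
  rw [← hcq, mul_pow, ← pow_mul] at h
  exact Nat.eq_of_mul_eq_mul_left hr
    (pow_right_injective₀ hq0 hq.ne' (mul_left_cancel₀ (pow_ne_zero _ hc0) h))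

theorem abs_mul_pow_le_pow_length [Nontrivial E] [Finite ι] (hT : ∀ i, IsHecke q (T i))
    (hq : 1 < q) (hfix : ∀ x, (∀ i, T i x = q • x) → x = 0) (hl : ∀ i, l.count i = r)
    (hc : (l.map T).prod = c • 1) : |c| * q ^ r ≤ q ^ l.length := by
  have := Fintype.ofFinite ι
  have hq0 : 0 < q := by positivity
  refine le_of_pow_le_pow_left₀ (finrank_pos (R := ℝ) (M := E)).ne' (by positivity) ?_
  rw [← abs_pow_finrank_mul_pow hT hq0 hl hc, mul_pow, ← pow_mul]
  gcongr
  exacts [hq.le, finrank_le_sum_finrank_ker_add_one hT hfix]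

end RealHecke

section InvariantSubspace

variable {W ι : Type*} [AddCommGroup W] [Module ℝ W] {E : Submodule ℝ W} {T : ι → End ℝ W}

theorem coe_list_prod_map_restrict (hE : ∀ i, ∀ x ∈ E, T i x ∈ E) (l : List ι) (x : E) :
    ((l.map fun i => (T i).restrict (hE i)).prod x : W) = (l.map T).prod x := by
  induction l generalizing x with
  | nil => rfl
  | cons i l ih => simp [ih]

variable {q c : ℝ} {l : List ι} {r : ℕ}

theorem list_prod_map_restrict_eq_smul (hE : ∀ i, ∀ x ∈ E, T i x ∈ E)
    (hc : ∀ x ∈ E, (l.map T).prod x = c • x) :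
    (l.map fun i => (T i).restrict (hE i)).prod = c • 1 :=
  LinearMap.ext fun x => Subtype.ext ((coe_list_prod_map_restrict hE l x).trans (hc x x.2))

variable [FiniteDimensional ℝ E] [DecidableEq ι]

theorem abs_mul_pow_le_pow_length_of_mem [Finite ι] (hT : ∀ i, IsHecke q (T i)) (hq : 1 < q)
    (hE : ∀ i, ∀ x ∈ E, T i x ∈ E) (hfix : ∀ x ∈ E, (∀ i, T i x = q • x) → x = 0)
    (hl : ∀ i, l.count i = r) (hc : ∀ x ∈ E, (l.map T).prod x = c • x) {v : W} (hv : v ∈ E)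
    (hv0 : v ≠ 0) : |c| * q ^ r ≤ q ^ l.length := by
  have : Nontrivial E := ⟨⟨v, hv⟩, 0, fun h => hv0 (congrArg Subtype.val h)⟩
  exact abs_mul_pow_le_pow_length (fun i => (hT i).restrict (hE i)) hq
    (fun x hx => Subtype.ext (hfix x x.2 fun i => congrArg Subtype.val (hx i))) hl
    (list_prod_map_restrict_eq_smul hE hc)

theorem exists_eq_sum_of_mem_of_abs_mul_pow_eq [Fintype ι] (hT : ∀ i, IsHecke q (T i))
    (hq : 1 < q) (hE : ∀ i, ∀ x ∈ E, T i x ∈ E)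
    (hfix : ∀ x ∈ E, (∀ i, T i x = q • x) → x = 0) (hr : 0 < r)
    (hl : ∀ i, l.count i = r) (hc : ∀ x ∈ E, (l.map T).prod x = c • x)
    (hcq : |c| * q ^ r = q ^ l.length) {v : W} (hv : v ∈ E) :
    ∃ g : ι → W, v = ∑ i, g i ∧ (∀ i, g i ∈ E) ∧ ∀ i j, j ≠ i → T j (g i) = q • g i := by
  obtain ⟨g, hvg, hg⟩ := exists_eq_sum_of_abs_mul_pow_eq (fun i => (hT i).restrict (hE i)) hq
    (fun x hx => Subtype.ext (hfix x x.2 fun i => congrArg Subtype.val (hx i))) hr hl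
    (list_prod_map_restrict_eq_smul hE hc) hcq ⟨v, hv⟩
  exact ⟨fun i => g i, by simpa using congrArg Subtype.val hvg, fun i => (g i).2,
    fun i j hji => congrArg Subtype.val (hg i j hji)⟩

end InvariantSubspace

section Matrices

open Matrix

variable {X : Type*} [Fintype X]

theorem posSemidef_smul_one_sub {M : Matrix X X ℝ} (hM : M.IsHermitian) {c : ℝ}
    (hc : ∀ μ : ℝ, ∀ v : X → ℝ, v ≠ 0 → M *ᵥ v = μ • v → μ ≤ c) : (c • 1 - M).PosSemidef := by
  have hH : (c • 1 - M).IsHermitian := (isHermitian_one.smul (IsSelfAdjoint.all c)).sub hM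
  refine hH.posSemidef_iff_eigenvalues_nonneg.2 fun i => ?_
  have hv := hH.mulVec_eigenvectorBasis i
  have hv0 : (hH.eigenvectorBasis i).ofLp ≠ 0 := fun h =>
    hH.eigenvectorBasis.orthonormal.ne_zero i (WithLp.ofLp_injective 2 h)
  rw [sub_mulVec, smul_mulVec, one_mulVec, sub_eq_iff_eq_add'] at hv
  have := hc (c - hH.eigenvalues i) _ hv0 (by rw [sub_smul, hv]; abel)
  simpa using this

theorem pow_length_smul_le_list_prod_mulVec {l : List (Matrix X X ℝ)} {c : ℝ} (hc : 0 ≤ c)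
    {v : X → ℝ} (hl : ∀ M ∈ l, (∀ x y, 0 ≤ M x y) ∧ c • v ≤ M *ᵥ v) :
    c ^ l.length • v ≤ l.prod *ᵥ v := by
  induction l with
  | nil => simp
  | cons M l ih =>
    obtain ⟨⟨hM, hMv⟩, hl⟩ := List.forall_mem_cons.1 hl
    calc c ^ (l.length + 1) • v = c ^ l.length • c • v := by rw [pow_succ, mul_smul]
      _ ≤ c ^ l.length • M *ᵥ v := smul_le_smul_of_nonneg_left hMv (by positivity)
      _ = M *ᵥ c ^ l.length • v := (mulVec_smul _ _ _).symm
      _ ≤ M *ᵥ l.prod *ᵥ v := fun x => dotProduct_le_dotProduct_of_nonneg_left (ih hl) (hM x)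
      _ = (M :: l).prod *ᵥ v := by rw [List.prod_cons, mulVec_mulVec]

theorem list_prod_mulVec_eq_pow_smul {l : List (Matrix X X ℝ)} {c : ℝ} {v : X → ℝ}
    (hl : ∀ M ∈ l, M *ᵥ v = c • v) : l.prod *ᵥ v = c ^ l.length • v := by
  induction l with
  | nil => simp
  | cons M l ih =>
    obtain ⟨hM, hl⟩ := List.forall_mem_cons.1 hl
    rw [List.prod_cons, ← mulVec_mulVec, ih hl, mulVec_smul, hM, List.length_cons, pow_succ,
      mul_smul]

theorem one_dotProduct_mulVec {M : Matrix X X ℝ} (hM : M.IsHermitian) {c : ℝ}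
    (hc : M *ᵥ 1 = c • 1) (v : X → ℝ) : 1 ⬝ᵥ M *ᵥ v = c * (1 ⬝ᵥ v) := by
  have hMT : Mᵀ = M := by simpa using hM.eq
  rw [dotProduct_mulVec, ← mulVec_transpose, hMT, hc, smul_dotProduct, smul_eq_mul]

theorem indicator_dotProduct (Y : Set X) (v : X → ℝ) :
    Y.indicator 1 ⬝ᵥ v = ∑ x with x ∈ Y, v x := by
  simp [dotProduct, Set.indicator_apply, Finset.sum_filter]

theorem indicator_dotProduct_one (Y : Set X) : Y.indicator 1 ⬝ᵥ (1 : X → ℝ) = Y.ncard := by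
  simp [indicator_dotProduct, Set.ncard_eq_toFinset_card', Set.toFinset_card, Fintype.card_subtype]

theorem indicator_dotProduct_indicator (Y : Set X) :
    Y.indicator 1 ⬝ᵥ Y.indicator (1 : X → ℝ) = Y.ncard := by
  rw [← indicator_dotProduct_one, indicator_dotProduct, indicator_dotProduct]
  exact Finset.sum_congr rfl fun x hx => Set.indicator_of_mem (Finset.mem_filter.1 hx).2 _

end Matrices

section RelMatrix

open Matrix

variable {X : Type*}

/-- The 0/1 matrix of a relation. -/
noncomputable def relMatrix (R : X → X → Prop) : Matrix X X ℝ :=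
  .of fun x y => if R x y then 1 else 0

theorem relMatrix_apply (R : X → X → Prop) (x y : X) :
    relMatrix R x y = if R x y then 1 else 0 := rfl

theorem relMatrix_nonneg (R : X → X → Prop) (x y : X) : 0 ≤ relMatrix R x y := by
  rw [relMatrix_apply]
  positivity

theorem relMatrix_eq : relMatrix (Eq : X → X → Prop) = 1 := by
  ext x y
  rw [relMatrix_apply, one_apply]

theorem isHermitian_relMatrix {R : X → X → Prop} (hR : ∀ x y, R x y → R y x) :
    (relMatrix R).IsHermitian := by
  ext x y
  rw [conjTranspose_apply, star_trivial, relMatrix_apply, relMatrix_apply,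
    if_congr (⟨hR y x, hR x y⟩ : R y x ↔ R x y) rfl rfl]

/-- The adjacency matrix of a partition of `X` into panels: two elements are adjacent if they are
distinct and lie in the same panel. -/
noncomputable def panelMatrix (s : Setoid X) : Matrix X X ℝ := relMatrix fun x y => s x y ∧ x ≠ y

theorem panelMatrix_eq_sub (s : Setoid X) : panelMatrix s = relMatrix s - 1 := by
  ext x y
  rw [panelMatrix, relMatrix_apply, Matrix.sub_apply, relMatrix_apply, one_apply]
  rcases eq_or_ne x y with rfl | hxy
  · simp
  · simp [hxy]

theorem isHermitian_panelMatrix (s : Setoid X) : (panelMatrix s).IsHermitian :=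
  isHermitian_relMatrix fun _ _ h => ⟨s.symm h.1, h.2.symm⟩

variable [Fintype X]

theorem relMatrix_mulVec_apply (R : X → X → Prop) (v : X → ℝ) (x : X) :
    (relMatrix R *ᵥ v) x = ∑ y with R x y, v y := by
  simp only [mulVec, dotProduct, relMatrix_apply, ite_mul, one_mul, zero_mul, Finset.sum_filter]

theorem relMatrix_mulVec_indicator_apply (R : X → X → Prop) (Y : Set X) (x : X) :
    (relMatrix R *ᵥ Y.indicator 1) x = ({y | R x y ∧ y ∈ Y} : Set X).ncard := by
  rw [relMatrix_mulVec_apply, Set.ncard_eq_toFinset_card', Set.toFinset_ofPred,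
    ← Finset.filter_filter]
  simp [Set.indicator_apply]

theorem relMatrix_mul_relMatrix_apply (R R' : X → X → Prop) (x z : X) :
    (relMatrix R * relMatrix R') x z = ({y | R x y ∧ R' y z} : Set X).ncard := by
  simp only [mul_apply, relMatrix_apply, ite_mul, one_mul, zero_mul, ← ite_and]
  rw [Finset.sum_boole, Set.ncard_eq_toFinset_card', Set.toFinset_ofPred]

theorem relMatrix_mul_relMatrix {R R' R'' : X → X → Prop}
    (hcomp : ∀ x y z, R x y → R' y z → R'' x z)
    (hex : ∀ x z, R'' x z → ∃! y, R x y ∧ R' y z) :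
    relMatrix R * relMatrix R' = relMatrix R'' := by
  ext x z
  rw [relMatrix_mul_relMatrix_apply, relMatrix_apply]
  split_ifs with h
  · obtain ⟨y, hy, huniq⟩ := hex x z h
    rw [(Set.eq_singleton_iff_unique_mem (s := {y | R x y ∧ R' y z})).2 ⟨hy, huniq⟩,
      Set.ncard_singleton, Nat.cast_one]
  · have : {y | R x y ∧ R' y z} = ∅ :=
      Set.eq_empty_of_forall_notMem fun y hy => h (hcomp x y z hy.1 hy.2)
    rw [this, Set.ncard_empty, Nat.cast_zero]

variable {s : Setoid X} {q : ℕ}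

theorem relMatrix_setoid_mulVec_one (hs : ∀ x, {y | s x y}.ncard = q + 1) :
    relMatrix s *ᵥ 1 = ((q : ℝ) + 1) • 1 := by
  ext x
  rw [relMatrix_mulVec_apply]
  have := hs x
  rw [Set.ncard_eq_toFinset_card', Set.toFinset_ofPred] at this
  simp [this]

theorem relMatrix_setoid_mul_self (hs : ∀ x, {y | s x y}.ncard = q + 1) :
    relMatrix s * relMatrix s = ((q : ℝ) + 1) • relMatrix s := by
  ext x z
  rw [relMatrix_mul_relMatrix_apply, Matrix.smul_apply, relMatrix_apply]
  split_ifs with hxz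
  · have : {y | s x y ∧ s y z} = {y | s x y} :=
      Set.ext fun y => ⟨And.left, fun hxy => ⟨hxy, s.trans (s.symm hxy) hxz⟩⟩
    simp [this, hs]
  · have : {y | s x y ∧ s y z} = ∅ :=
      Set.eq_empty_of_forall_notMem fun y hy => hxz (s.trans hy.1 hy.2)
    simp [this]

theorem isHecke_panelMatrix (hs : ∀ x, {y | s x y}.ncard = q + 1) :
    IsHecke (q : ℝ) (panelMatrix s) := by
  rw [IsHecke, panelMatrix_eq_sub, sub_add_cancel, sub_sub, mul_sub, relMatrix_setoid_mul_self hs]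
  simp [add_smul, add_comm, mul_add]

theorem panelMatrix_mulVec_one (hs : ∀ x, {y | s x y}.ncard = q + 1) :
    panelMatrix s *ᵥ 1 = (q : ℝ) • 1 := by
  rw [panelMatrix_eq_sub, sub_mulVec, one_mulVec, relMatrix_setoid_mulVec_one hs, add_smul,
    one_smul, add_sub_cancel_right]

theorem eq_of_panelMatrix_mulVec_eq {v : X → ℝ} (hv : panelMatrix s *ᵥ v = (q : ℝ) • v) {x y : X}
    (hxy : s x y) : v x = v y := by
  rw [panelMatrix_eq_sub, sub_mulVec, one_mulVec, sub_eq_iff_eq_add] at hv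
  have hsum (x : X) : ∑ y with s x y, v y = (q + 1) * v x := by
    rw [← relMatrix_mulVec_apply, hv, Pi.add_apply, Pi.smul_apply, smul_eq_mul, add_one_mul]
  have hclass : ∑ z with s x z, v z = ∑ z with s y z, v z := by
    refine Finset.sum_congr (Finset.filter_congr fun z _ => ?_) fun _ _ => rfl
    exact ⟨s.trans (s.symm hxy), s.trans hxy⟩
  rw [hsum, hsum] at hclass
  exact mul_left_cancel₀ (by positivity) hclass

end RelMatrix

/-- The combinatorial data of a spherical building with chamber set `X`, panels of types `ι` and
`q + 1` chambers in each panel that are used in the spectral analysis of opposition: the panel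
partitions `adj i`, the opposition relation `opp`, and a word in `ι` (a reduced word of the longest
Weyl group element) that contains each letter `r` times and factorizes the opposition matrix. -/
structure OppositionSystem (X ι : Type*) [Fintype X] [DecidableEq ι] (q r : ℕ) where
  adj : ι → Setoid X
  opp : X → X → Prop
  word : List ι
  ncard_panel : ∀ i x, {y | adj i x y}.ncard = q + 1
  eq_top_of_adj_le : ∀ R : Setoid X, (∀ i, adj i ≤ R) → R = ⊤
  opp_symm : ∀ x y, opp x y → opp y x
  exists_gate : ∀ i x y, opp x y → ∃ z, adj i y z ∧ ∀ y', adj i y y' → (opp x y' ↔ y' ≠ z)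
  opp_panel_symm : ∀ i x y y', opp x y' → adj i y' y → ∃ x', adj i x x' ∧ opp x' y
  count_word : ∀ i, word.count i = r
  list_prod_word : (word.map fun i => panelMatrix (adj i)).prod = relMatrix opp

namespace OppositionSystem

open Matrix

variable {X ι : Type*} [Fintype X] [DecidableEq ι] {q r : ℕ} (S : OppositionSystem X ι q r)

theorem relMatrix_opp_mul_relMatrix_adj (i : ι) :
    relMatrix S.opp * relMatrix (S.adj i) =
      (q : ℝ) • relMatrix fun x y => ∃ y', S.adj i y y' ∧ S.opp x y' := by
  ext x y
  rw [relMatrix_mul_relMatrix_apply, Matrix.smul_apply, relMatrix_apply]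
  split_ifs with h
  · obtain ⟨y', hyy', hxy'⟩ := h
    obtain ⟨z, hz, hgate⟩ := S.exists_gate i x y' hxy'
    have hopp : {w | S.opp x w ∧ S.adj i w y} = {w | S.adj i y' w} \ {z} := by
      ext w
      refine ⟨fun hw => ?_, fun hw => ⟨(hgate w hw.1).2 hw.2, ?_⟩⟩
      · have hy'w := (S.adj i).symm ((S.adj i).trans hw.2 hyy')
        exact ⟨hy'w, (hgate w hy'w).1 hw.1⟩
      · exact (S.adj i).symm ((S.adj i).trans hyy' hw.1)
    rw [hopp, Set.ncard_sdiff_singleton_of_mem (by exact hz), S.ncard_panel]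
    simp
  · have hopp : {w | S.opp x w ∧ S.adj i w y} = ∅ :=
      Set.eq_empty_of_forall_notMem fun w hw => h ⟨w, (S.adj i).symm hw.2, hw.1⟩
    simp [hopp]

theorem commute_panelMatrix_opp (i : ι) :
    Commute (panelMatrix (S.adj i)) (relMatrix S.opp) := by
  have hnear (x y : X) (h : ∃ y', S.adj i y y' ∧ S.opp x y') :
      ∃ x', S.adj i x x' ∧ S.opp y x' := by
    obtain ⟨y', hyy', hxy'⟩ := h
    obtain ⟨x', hxx', hx'y⟩ := S.opp_panel_symm i x y y' hxy' ((S.adj i).symm hyy')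
    exact ⟨x', hxx', S.opp_symm _ _ hx'y⟩
  have hAP : (relMatrix S.opp * relMatrix (S.adj i)).IsHermitian := by
    rw [S.relMatrix_opp_mul_relMatrix_adj]
    exact (isHermitian_relMatrix hnear).smul (IsSelfAdjoint.all _)
  have hP : (relMatrix (S.adj i)).IsHermitian := isHermitian_relMatrix fun _ _ => (S.adj i).symm
  rw [panelMatrix_eq_sub]
  exact ((((isHermitian_relMatrix S.opp_symm).commute_iff hP).2 hAP).symm).sub_left
    (Commute.one_left _)

theorem relMatrix_opp_mulVec_one : relMatrix S.opp *ᵥ 1 = (q : ℝ) ^ S.word.length • 1 := by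
  rw [← S.list_prod_word, list_prod_mulVec_eq_pow_smul (c := (q : ℝ)), List.length_map]
  simp only [List.mem_map, forall_exists_index, and_imp, forall_apply_eq_imp_iff₂]
  exact fun i _ => panelMatrix_mulVec_one (S.ncard_panel i)

theorem eq_of_forall_panelMatrix_mulVec_eq {v : X → ℝ}
    (hv : ∀ i, panelMatrix (S.adj i) *ᵥ v = (q : ℝ) • v) (x y : X) : v x = v y := by
  have htop : Setoid.ker v = ⊤ :=
    S.eq_top_of_adj_le _ fun i _ _ => eq_of_panelMatrix_mulVec_eq (hv i)
  exact Setoid.eq_top_iff.1 htop x y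

end OppositionSystem

namespace OppositionSystem

open Matrix

variable {X ι : Type*} [Fintype X] [DecidableEq ι] {q r : ℕ} (S : OppositionSystem X ι q r)

/-- The functions with sum zero that are eigenvectors of the opposition matrix for `c`. -/
noncomputable def meanZeroEigenspace (c : ℝ) : Submodule ℝ (X → ℝ) :=
  End.eigenspace (toLin' (relMatrix S.opp)) c ⊓ LinearMap.ker (∑ x, LinearMap.proj x)

theorem mem_meanZeroEigenspace {c : ℝ} {v : X → ℝ} :
    v ∈ S.meanZeroEigenspace c ↔ relMatrix S.opp *ᵥ v = c • v ∧ 1 ⬝ᵥ v = 0 := by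
  simp [meanZeroEigenspace, one_dotProduct]

theorem panelMatrix_mulVec_mem_meanZeroEigenspace (i : ι) {c : ℝ} {v : X → ℝ}
    (hv : v ∈ S.meanZeroEigenspace c) :
    panelMatrix (S.adj i) *ᵥ v ∈ S.meanZeroEigenspace c := by
  obtain ⟨hAv, hv⟩ := S.mem_meanZeroEigenspace.1 hv
  refine S.mem_meanZeroEigenspace.2 ⟨?_, ?_⟩
  · rw [mulVec_mulVec, ← (S.commute_panelMatrix_opp i).eq, ← mulVec_mulVec, hAv, mulVec_smul]
  · rw [one_dotProduct_mulVec (isHermitian_panelMatrix _)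
      (panelMatrix_mulVec_one (S.ncard_panel i)), hv, mul_zero]

theorem eq_zero_of_forall_panelMatrix_mulVec_eq {v : X → ℝ} (hsum : 1 ⬝ᵥ v = 0)
    (hv : ∀ i, panelMatrix (S.adj i) *ᵥ v = (q : ℝ) • v) : v = 0 := by
  ext x
  have hconst : 1 ⬝ᵥ v = Fintype.card X * v x := by
    simp [one_dotProduct, Finset.sum_congr rfl
      fun y _ => S.eq_of_forall_panelMatrix_mulVec_eq hv y x]
  have : Nonempty X := ⟨x⟩
  exact (mul_eq_zero.1 (hconst.symm.trans hsum)).resolve_left (by simp)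

theorem list_prod_toLin'_apply_of_mem {c : ℝ} {v : X → ℝ} (hv : v ∈ S.meanZeroEigenspace c) :
    (S.word.map fun i => toLin' (panelMatrix (S.adj i))).prod v = c • v := by
  have := congrArg (toLinAlgEquiv' (R := ℝ) (n := X)) S.list_prod_word
  rw [map_list_prod, List.map_map] at this
  exact (LinearMap.congr_fun this v).trans (S.mem_meanZeroEigenspace.1 hv).1

/-- The largest possible absolute value of a nontrivial eigenvalue of the opposition matrix. -/
noncomputable def spectralBound : ℝ := q ^ S.word.length / q ^ r

theorem spectralBound_mul_pow (hq : 1 < q) :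
    S.spectralBound * (q : ℝ) ^ r = (q : ℝ) ^ S.word.length :=
  div_mul_cancel₀ _ (by positivity)

theorem spectralBound_pos (hq : 1 < q) : 0 < S.spectralBound := by
  rw [spectralBound]
  positivity

theorem isHecke_toLin'_panelMatrix (i : ι) :
    IsHecke (q : ℝ) (toLin' (panelMatrix (S.adj i))) :=
  (isHecke_panelMatrix (S.ncard_panel i)).map (toLinAlgEquiv' (R := ℝ) (n := X)).toAlgHom

/-- The opposition matrix with its eigenvalue on the constant functions replaced by zero. -/
noncomputable def deflatedMatrix : Matrix X X ℝ :=
  relMatrix S.opp - (q ^ S.word.length / Fintype.card X : ℝ) • vecMulVec 1 1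

theorem deflatedMatrix_mulVec (v : X → ℝ) : S.deflatedMatrix *ᵥ v =
    relMatrix S.opp *ᵥ v - (q ^ S.word.length / Fintype.card X * (1 ⬝ᵥ v) : ℝ) • 1 := by
  rw [deflatedMatrix, sub_mulVec, smul_mulVec, vecMulVec_mulVec, op_smul_eq_smul, mul_smul]

theorem dotProduct_deflatedMatrix_mulVec (v : X → ℝ) : v ⬝ᵥ S.deflatedMatrix *ᵥ v =
    v ⬝ᵥ relMatrix S.opp *ᵥ v - q ^ S.word.length / Fintype.card X * (1 ⬝ᵥ v) ^ 2 := by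
  rw [deflatedMatrix_mulVec, dotProduct_sub, dotProduct_smul, dotProduct_comm v 1, smul_eq_mul,
    mul_assoc, sq]

theorem deflatedMatrix_mulVec_one : S.deflatedMatrix *ᵥ 1 = 0 := by
  cases isEmpty_or_nonempty X
  · exact Subsingleton.elim _ _
  · rw [deflatedMatrix_mulVec, relMatrix_opp_mulVec_one, one_dotProduct_one,
      div_mul_cancel₀ _ (by simp), sub_self]

theorem isHermitian_deflatedMatrix : S.deflatedMatrix.IsHermitian := by
  refine (isHermitian_relMatrix S.opp_symm).sub (IsHermitian.smul ?_ (IsSelfAdjoint.all _))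
  ext
  simp [vecMulVec_apply]

theorem mem_meanZeroEigenspace_of_deflatedMatrix_mulVec_eq {c : ℝ} (hc : c ≠ 0) {v : X → ℝ}
    (hv : S.deflatedMatrix *ᵥ v = c • v) : v ∈ S.meanZeroEigenspace c := by
  have hsum : 1 ⬝ᵥ v = 0 := by
    have := one_dotProduct_mulVec S.isHermitian_deflatedMatrix (c := 0)
      (by rw [S.deflatedMatrix_mulVec_one, zero_smul]) v
    rw [hv, dotProduct_smul, zero_mul] at this
    exact (mul_eq_zero.1 this).resolve_left hc
  rw [deflatedMatrix_mulVec, hsum, mul_zero, zero_smul, sub_zero] at hv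
  exact S.mem_meanZeroEigenspace.2 ⟨hv, hsum⟩

theorem exists_eq_sum_of_mem_meanZeroEigenspace [Fintype ι] (hq : 1 < q) (hr : 0 < r)
    {v : X → ℝ} (hv : v ∈ S.meanZeroEigenspace (-S.spectralBound)) :
    ∃ g : ι → X → ℝ, v = ∑ i, g i ∧ (∀ i, relMatrix S.opp *ᵥ g i = -S.spectralBound • g i) ∧
      ∀ i j, j ≠ i → ∀ x y, S.adj j x y → g i x = g i y := by
  obtain ⟨g, hvg, hg, hTg⟩ := exists_eq_sum_of_mem_of_abs_mul_pow_eq S.isHecke_toLin'_panelMatrix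
    (by exact_mod_cast hq) (fun i _ => S.panelMatrix_mulVec_mem_meanZeroEigenspace i)
    (fun _ hx => S.eq_zero_of_forall_panelMatrix_mulVec_eq (S.mem_meanZeroEigenspace.1 hx).2)
    hr S.count_word (fun _ => S.list_prod_toLin'_apply_of_mem)
    (by rw [abs_neg, abs_of_pos (S.spectralBound_pos hq), S.spectralBound_mul_pow hq]) hv
  exact ⟨g, hvg, fun i => (S.mem_meanZeroEigenspace.1 (hg i)).1,
    fun i j hji _ _ => eq_of_panelMatrix_mulVec_eq (hTg i j hji)⟩

variable [Finite ι]

theorem abs_le_spectralBound (hq : 1 < q) {c : ℝ} {v : X → ℝ} (hv0 : v ≠ 0)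
    (hv : v ∈ S.meanZeroEigenspace c) : |c| ≤ S.spectralBound :=
  (le_div_iff₀ (by positivity)).2 <| abs_mul_pow_le_pow_length_of_mem S.isHecke_toLin'_panelMatrix
    (by exact_mod_cast hq) (fun i _ => S.panelMatrix_mulVec_mem_meanZeroEigenspace i)
    (fun _ hx => S.eq_zero_of_forall_panelMatrix_mulVec_eq (S.mem_meanZeroEigenspace.1 hx).2)
    S.count_word (fun _ => S.list_prod_toLin'_apply_of_mem) hv hv0

theorem abs_le_spectralBound_of_deflatedMatrix_mulVec_eq (hq : 1 < q) {c : ℝ} {v : X → ℝ}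
    (hv0 : v ≠ 0) (hv : S.deflatedMatrix *ᵥ v = c • v) : |c| ≤ S.spectralBound := by
  rcases eq_or_ne c 0 with rfl | hc
  · simpa using (S.spectralBound_pos hq).le
  · exact S.abs_le_spectralBound hq hv0 (S.mem_meanZeroEigenspace_of_deflatedMatrix_mulVec_eq hc hv)

theorem posSemidef_spectralBound_sub (hq : 1 < q) :
    (S.spectralBound • 1 - S.deflatedMatrix).PosSemidef :=
  posSemidef_smul_one_sub S.isHermitian_deflatedMatrix fun _ _ hv0 hv =>
    (le_abs_self _).trans (S.abs_le_spectralBound_of_deflatedMatrix_mulVec_eq hq hv0 hv)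

theorem posSemidef_spectralBound_add (hq : 1 < q) :
    (S.spectralBound • 1 + S.deflatedMatrix).PosSemidef := by
  rw [← sub_neg_eq_add]
  refine posSemidef_smul_one_sub S.isHermitian_deflatedMatrix.neg fun c v hv0 hv => ?_
  rw [neg_mulVec, neg_eq_iff_eq_neg, ← neg_smul] at hv
  have := S.abs_le_spectralBound_of_deflatedMatrix_mulVec_eq hq hv0 hv
  exact (neg_le_neg_iff.1 (by simpa using neg_le_of_abs_le this))

end OppositionSystem

theorem pow_mul_sub_le_sub_one_pow_mul {x : ℝ} (hx : 1 ≤ x) (N : ℕ) :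
    x ^ N * (x - N) ≤ (x - 1) ^ N * x := by
  have hx0 : x ≠ 0 := by positivity
  have hbernoulli := one_add_mul_le_pow (a := -x⁻¹) (by linarith [inv_le_one_of_one_le₀ hx]) N
  calc x ^ N * (x - N) = (1 + N * -x⁻¹) * (x ^ N * x) := by field_simp; ring
    _ ≤ (1 + -x⁻¹) ^ N * (x ^ N * x) := by gcongr
    _ = ((1 + -x⁻¹) * x) ^ N * x := by rw [← mul_assoc, ← mul_pow]
    _ = (x - 1) ^ N * x := by rw [add_mul, neg_mul, inv_mul_cancel₀ hx0, one_mul, ← sub_eq_add_neg]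

namespace OppositionSystem

open Matrix

variable {X ι : Type*} [Fintype X] [DecidableEq ι] {q r : ℕ} (S : OppositionSystem X ι q r)

/-- A set of chambers that contains, with each of its members, all but at most one of the chambers
of every panel through it. -/
def IsNearlyClosed (Y : Set X) : Prop :=
  ∀ i, ∀ y ∈ Y, ∃ z, ∀ y', S.adj i y y' → y' ≠ z → y' ∈ Y

variable {S} {Y : Set X}

theorem IsNearlyClosed.sub_one_smul_indicator_le (hY : S.IsNearlyClosed Y) (i : ι) :
    ((q : ℝ) - 1) • Y.indicator 1 ≤ panelMatrix (S.adj i) *ᵥ Y.indicator 1 := by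
  intro x
  rw [panelMatrix, relMatrix_mulVec_indicator_apply, Pi.smul_apply, smul_eq_mul]
  by_cases hx : x ∈ Y
  · obtain ⟨z, hz⟩ := hY i x hx
    have hsub : {y | S.adj i x y} \ {x, z} ⊆ {y | (S.adj i x y ∧ x ≠ y) ∧ y ∈ Y} := fun y hy =>
      ⟨⟨hy.1, fun h => hy.2 (Or.inl h.symm)⟩, hz y hy.1 fun h => hy.2 (Or.inr h)⟩
    have hcard := (Set.le_ncard_sdiff {x, z} {y | S.adj i x y}).trans (Set.ncard_le_ncard hsub)
    have hpair : ({x, z} : Set X).ncard ≤ 2 := by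
      simpa using Set.ncard_insert_le x {z}
    rw [S.ncard_panel] at hcard
    rw [Set.indicator_of_mem hx, Pi.one_apply, mul_one, sub_le_iff_le_add,
      ← Nat.cast_add_one, Nat.cast_le]
    lia
  · rw [Set.indicator_of_notMem hx, mul_zero]
    positivity

theorem IsNearlyClosed.pow_mul_ncard_le (hY : S.IsNearlyClosed Y) (hq : 1 ≤ q) :
    ((q : ℝ) - 1) ^ S.word.length * Y.ncard ≤
      Y.indicator 1 ⬝ᵥ relMatrix S.opp *ᵥ Y.indicator 1 := by
  have hle : ((q : ℝ) - 1) ^ S.word.length • Y.indicator 1 ≤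
      relMatrix S.opp *ᵥ Y.indicator 1 := by
    rw [← S.list_prod_word, ← List.length_map (fun i => panelMatrix (S.adj i))]
    refine pow_length_smul_le_list_prod_mulVec (sub_nonneg.2 (by exact_mod_cast hq)) ?_
    simp only [List.mem_map, forall_exists_index, and_imp, forall_apply_eq_imp_iff₂]
    exact fun i _ => ⟨relMatrix_nonneg _, hY.sub_one_smul_indicator_le i⟩
  rw [← indicator_dotProduct_indicator, ← smul_eq_mul, ← dotProduct_smul]
  exact dotProduct_le_dotProduct_of_nonneg_left hle (Set.indicator_nonneg fun _ _ => zero_le_one)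

theorem spectralBound_mul_le (hq : 1 < q) (hr : 0 < r) :
    S.spectralBound * q ≤ (q : ℝ) ^ S.word.length := by
  rw [← S.spectralBound_mul_pow hq]
  have := S.spectralBound_pos hq
  gcongr
  exact le_self_pow₀ (by exact_mod_cast hq.le) hr.ne'

variable [Finite ι]

theorem IsNearlyClosed.sub_one_pow_le (hY : S.IsNearlyClosed Y) (hYne : Y.Nonempty) (hq : 1 < q) :
    ((q : ℝ) - 1) ^ S.word.length ≤
      S.spectralBound + q ^ S.word.length * (Y.ncard / Fintype.card X) := by
  have hspec := (S.posSemidef_spectralBound_sub hq).dotProduct_mulVec_nonneg (Y.indicator 1)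
  rw [star_trivial, sub_mulVec, smul_mulVec, one_mulVec, dotProduct_sub, dotProduct_smul,
    indicator_dotProduct_indicator, dotProduct_deflatedMatrix_mulVec, dotProduct_comm 1,
    indicator_dotProduct_one, smul_eq_mul] at hspec
  have hm : (0 : ℝ) < Y.ncard := by exact_mod_cast hYne.ncard_pos
  refine le_of_mul_le_mul_right ((hY.pow_mul_ncard_le hq.le).trans ?_) hm
  calc _ ≤ S.spectralBound * Y.ncard + q ^ S.word.length / Fintype.card X * Y.ncard ^ 2 := by
        linarith
    _ = _ := by ring

theorem IsNearlyClosed.card_lt_two_mul_ncard (hY : S.IsNearlyClosed Y) (hYne : Y.Nonempty)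
    (hr : 0 < r) (hq : 2 * (S.word.length + 1) < q) : Fintype.card X < 2 * Y.ncard := by
  set N := S.word.length
  have hq1 : 1 < q := by lia
  have hq0 : (0 : ℝ) < q := by positivity
  have : Nonempty X := ⟨hYne.some⟩
  set ρ : ℝ := Y.ncard / Fintype.card X with hρ
  have hdensity : (q : ℝ) ^ N * (q - N) ≤ q ^ N * (1 + ρ * q) :=
    calc (q : ℝ) ^ N * (q - N) ≤ (q - 1) ^ N * q :=
          pow_mul_sub_le_sub_one_pow_mul (by exact_mod_cast hq1.le) N
      _ ≤ (S.spectralBound + q ^ N * ρ) * q := by gcongr; exact hY.sub_one_pow_le hYne hq1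
      _ = S.spectralBound * q + q ^ N * (ρ * q) := by ring
      _ ≤ q ^ N + q ^ N * (ρ * q) := by gcongr; exact spectralBound_mul_le hq1 hr
      _ = q ^ N * (1 + ρ * q) := by ring
  have hq' : 2 * ((N : ℝ) + 1) < q := by exact_mod_cast hq
  have hhalf : 1 / 2 * (q : ℝ) < ρ * q := by
    linarith [le_of_mul_le_mul_left hdensity (by positivity)]
  have hρ2 := lt_of_mul_lt_mul_right hhalf hq0.le
  rw [hρ, div_lt_div_iff₀ two_pos (by positivity), one_mul] at hρ2
  rw [mul_comm]
  exact_mod_cast hρ2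

end OppositionSystem

namespace OppositionSystem

open Matrix

variable {X ι : Type*} [Fintype X] [DecidableEq ι] {q r : ℕ} (S : OppositionSystem X ι q r)

/-- A set of pairwise non-opposite chambers that attains the ratio bound. -/
structure IsRatioSharpEKR (𝓕 : Set X) : Prop where
  not_opp : ∀ x ∈ 𝓕, ∀ y ∈ 𝓕, ¬ S.opp x y
  ncard_eq : (𝓕.ncard : ℝ) = Fintype.card X / ((q : ℝ) ^ r + 1)

/-- The functions `g i` decompose the indicator function of `𝓕`, up to a constant function, into
eigenvectors of the opposition matrix such that `g i` is constant on all panels whose type is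
not `i`. -/
structure IsPanelDecomposition (𝓕 : Set X) (g : ι → X → ℝ) : Prop where
  eq_sum : ∀ x, 𝓕.indicator 1 x = ((q : ℝ) ^ r + 1)⁻¹ + ∑ᶠ i, g i x
  opp_mulVec : ∀ i, relMatrix S.opp *ᵥ g i = -S.spectralBound • g i
  eq_of_adj : ∀ i j, j ≠ i → ∀ x y, S.adj j x y → g i x = g i y

variable {S} {𝓕 : Set X}

theorem IsRatioSharpEKR.indicator_dotProduct_opp_mulVec (h𝓕 : S.IsRatioSharpEKR 𝓕) :
    𝓕.indicator 1 ⬝ᵥ relMatrix S.opp *ᵥ 𝓕.indicator 1 = 0 := by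
  rw [indicator_dotProduct]
  refine Finset.sum_eq_zero fun x hx => ?_
  have : {y | S.opp x y ∧ y ∈ 𝓕} = ∅ := Set.eq_empty_of_forall_notMem fun y hy =>
    h𝓕.not_opp x (Finset.mem_filter.1 hx).2 y hy.2 hy.1
  rw [relMatrix_mulVec_indicator_apply, this, Set.ncard_empty, Nat.cast_zero]

theorem IsRatioSharpEKR.indicator_sub_dotProduct_self (h𝓕 : S.IsRatioSharpEKR 𝓕) :
    (𝓕.indicator 1 - ((q : ℝ) ^ r + 1)⁻¹ • 1) ⬝ᵥ (𝓕.indicator 1 - ((q : ℝ) ^ r + 1)⁻¹ • 1) =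
      Fintype.card X * (q : ℝ) ^ r / ((q : ℝ) ^ r + 1) ^ 2 := by
  simp only [sub_dotProduct, dotProduct_sub, smul_dotProduct, dotProduct_smul,
    indicator_dotProduct_indicator, indicator_dotProduct_one, dotProduct_comm 1 (𝓕.indicator 1),
    one_dotProduct_one, smul_eq_mul, h𝓕.ncard_eq]
  field_simp
  ring

theorem IsRatioSharpEKR.indicator_sub_dotProduct_deflatedMatrix_mulVec
    (h𝓕 : S.IsRatioSharpEKR 𝓕) :
    (𝓕.indicator 1 - ((q : ℝ) ^ r + 1)⁻¹ • 1) ⬝ᵥ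
        S.deflatedMatrix *ᵥ (𝓕.indicator 1 - ((q : ℝ) ^ r + 1)⁻¹ • 1) =
      -((q : ℝ) ^ S.word.length * Fintype.card X / ((q : ℝ) ^ r + 1) ^ 2) := by
  have h1D := one_dotProduct_mulVec S.isHermitian_deflatedMatrix (c := 0)
    (by rw [deflatedMatrix_mulVec_one, zero_smul]) (𝓕.indicator 1)
  rw [mulVec_sub, mulVec_smul, deflatedMatrix_mulVec_one, smul_zero, sub_zero, sub_dotProduct,
    smul_dotProduct, h1D, zero_mul, smul_zero, sub_zero, dotProduct_deflatedMatrix_mulVec,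
    h𝓕.indicator_dotProduct_opp_mulVec, dotProduct_comm 1, indicator_dotProduct_one, h𝓕.ncard_eq,
    zero_sub]
  rcases eq_or_ne (Fintype.card X : ℝ) 0 with hX | hX
  · simp [hX]
  · field_simp

theorem IsPanelDecomposition.exists_ne_zero {g : ι → X → ℝ}
    (hg : S.IsPanelDecomposition 𝓕 g) {x : X} (hx : x ∉ 𝓕) : ∃ i, g i x ≠ 0 := by
  by_contra! hzero
  have hsum := hg.eq_sum x
  simp only [Set.indicator_of_notMem hx, hzero, finsum_zero, add_zero] at hsum
  have : (0 : ℝ) < ((q : ℝ) ^ r + 1)⁻¹ := by positivity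
  exact this.ne hsum

variable [Finite ι]

/- The equality case of Hoffman's ratio bound. -/
theorem IsRatioSharpEKR.indicator_sub_mem_meanZeroEigenspace (h𝓕 : S.IsRatioSharpEKR 𝓕)
    (hq : 1 < q) : 𝓕.indicator 1 - ((q : ℝ) ^ r + 1)⁻¹ • 1 ∈
      S.meanZeroEigenspace (-S.spectralBound) := by
  set w : X → ℝ := 𝓕.indicator 1 - ((q : ℝ) ^ r + 1)⁻¹ • 1 with hw
  have hzero : (S.spectralBound • 1 + S.deflatedMatrix) *ᵥ w = 0 := by
    rw [← (S.posSemidef_spectralBound_add hq).dotProduct_mulVec_zero_iff, star_trivial, add_mulVec,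
      dotProduct_add, smul_mulVec, one_mulVec, dotProduct_smul, smul_eq_mul, hw,
      h𝓕.indicator_sub_dotProduct_deflatedMatrix_mulVec, h𝓕.indicator_sub_dotProduct_self,
      ← S.spectralBound_mul_pow hq]
    ring
  refine S.mem_meanZeroEigenspace_of_deflatedMatrix_mulVec_eq
    (neg_ne_zero.2 (S.spectralBound_pos hq).ne') ?_
  rw [add_mulVec, smul_mulVec, one_mulVec] at hzero
  rw [neg_smul]
  exact eq_neg_of_add_eq_zero_right hzero

theorem IsRatioSharpEKR.exists_isPanelDecomposition (h𝓕 : S.IsRatioSharpEKR 𝓕) (hq : 1 < q)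
    (hr : 0 < r) : ∃ g, S.IsPanelDecomposition 𝓕 g := by
  have := Fintype.ofFinite ι
  obtain ⟨g, hsum, hopp, hadj⟩ := S.exists_eq_sum_of_mem_meanZeroEigenspace hq hr
    (h𝓕.indicator_sub_mem_meanZeroEigenspace hq)
  refine ⟨g, fun x => ?_, hopp, hadj⟩
  have := congrFun hsum x
  simp only [Pi.sub_apply, Pi.smul_apply, Pi.one_apply, smul_eq_mul, mul_one,
    Finset.sum_apply] at this
  rw [finsum_eq_sum_of_fintype, ← this, add_sub_cancel]

theorem IsRatioSharpEKR.exists_opp (h𝓕 : S.IsRatioSharpEKR 𝓕) (hq : 1 < q) {x : X}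
    (hx : x ∉ 𝓕) : ∃ y ∈ 𝓕, S.opp x y := by
  have hmem := (S.mem_meanZeroEigenspace.1 (h𝓕.indicator_sub_mem_meanZeroEigenspace hq)).1
  rw [mulVec_sub, mulVec_smul, relMatrix_opp_mulVec_one, sub_eq_iff_eq_add] at hmem
  have hcount := congrFun hmem x
  rw [relMatrix_mulVec_indicator_apply] at hcount
  simp only [Pi.add_apply, Pi.smul_apply, Pi.sub_apply, Set.indicator_of_notMem hx, Pi.one_apply,
    smul_eq_mul, mul_one, zero_sub, neg_mul_neg] at hcount
  have hpos : (0 : ℝ) < ({y | S.opp x y ∧ y ∈ 𝓕} : Set X).ncard := by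
    have := S.spectralBound_pos hq
    rw [hcount]
    positivity
  obtain ⟨y, hxy, hy⟩ := Set.nonempty_of_ncard_ne_zero (Nat.cast_pos.1 hpos).ne'
  exact ⟨y, hy, hxy⟩

namespace IsPanelDecomposition

variable {g : ι → X → ℝ}

theorem eq_of_adj_of_mem_iff (hg : S.IsPanelDecomposition 𝓕 g) (i : ι) {j : ι} {x y : X}
    (hxy : S.adj j x y) (hmem : x ∈ 𝓕 ↔ y ∈ 𝓕) : g i x = g i y := by
  have := Fintype.ofFinite ι
  rcases eq_or_ne j i with rfl | hji
  · have hind : 𝓕.indicator (1 : X → ℝ) x = 𝓕.indicator 1 y := by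
      simp only [Set.indicator_apply, hmem, Pi.one_apply]
    rw [hg.eq_sum, hg.eq_sum, finsum_eq_sum_of_fintype, finsum_eq_sum_of_fintype, add_right_inj,
      ← Finset.add_sum_erase _ _ (Finset.mem_univ j), ← Finset.add_sum_erase _ _
      (Finset.mem_univ j), Finset.sum_congr rfl fun i hi =>
        hg.eq_of_adj i j (Finset.ne_of_mem_erase hi).symm x y hxy] at hind
    exact add_right_cancel hind
  · exact hg.eq_of_adj i j hji x y hxy

theorem isNearlyClosed_levelSet (hg : S.IsPanelDecomposition 𝓕 g) (h𝓕 : S.IsRatioSharpEKR 𝓕)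
    (hq : 1 < q) (i : ι) (a : ℝ) : S.IsNearlyClosed {x | x ∉ 𝓕 ∧ g i x = a} := by
  rintro j y ⟨hy, rfl⟩
  obtain ⟨x, hx, hyx⟩ := h𝓕.exists_opp hq hy
  obtain ⟨z, -, hgate⟩ := S.exists_gate j x y (S.opp_symm _ _ hyx)
  refine ⟨z, fun y' hyy' hy'z => ?_⟩
  have hy' : y' ∉ 𝓕 := fun h => h𝓕.not_opp x hx y' h ((hgate y' hyy').2 hy'z)
  exact ⟨hy', (hg.eq_of_adj_of_mem_iff i hyy' (iff_of_false hy hy')).symm⟩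

theorem eq_of_notMem (hg : S.IsPanelDecomposition 𝓕 g) (h𝓕 : S.IsRatioSharpEKR 𝓕) (hr : 0 < r)
    (hq : 2 * (S.word.length + 1) < q) (i : ι) {x y : X} (hx : x ∉ 𝓕) (hy : y ∉ 𝓕) :
    g i x = g i y := by
  by_contra hne
  have hlarge {z : X} (hz : z ∉ 𝓕) :=
    (hg.isNearlyClosed_levelSet h𝓕 (by lia) i (g i z)).card_lt_two_mul_ncard ⟨z, hz, rfl⟩ hr hq
  have hdisj : Disjoint {z | z ∉ 𝓕 ∧ g i z = g i x} {z | z ∉ 𝓕 ∧ g i z = g i y} :=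
    Set.disjoint_left.2 fun z hzx hzy => hne (hzx.2.symm.trans hzy.2)
  have hle := Set.ncard_le_card ({z | z ∉ 𝓕 ∧ g i z = g i x} ∪ {z | z ∉ 𝓕 ∧ g i z = g i y})
  rw [Set.ncard_union_eq hdisj, Nat.card_eq_fintype_card] at hle
  have := hlarge hx
  have := hlarge hy
  lia

theorem eq_neg_pow_mul (hg : S.IsPanelDecomposition 𝓕 g) (h𝓕 : S.IsRatioSharpEKR 𝓕) (hr : 0 < r)
    (hq : 2 * (S.word.length + 1) < q) (i : ι) {x y : X} (hx : x ∈ 𝓕) (hy : y ∉ 𝓕) :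
    g i x = -((q : ℝ) ^ r * g i y) := by
  have hconst : (relMatrix S.opp *ᵥ g i) x = (relMatrix S.opp *ᵥ (g i y • 1)) x := by
    rw [relMatrix_mulVec_apply, relMatrix_mulVec_apply]
    refine Finset.sum_congr rfl fun z hz => ?_
    have hz𝓕 : z ∉ 𝓕 := fun h => h𝓕.not_opp x hx z h (Finset.mem_filter.1 hz).2
    simpa using hg.eq_of_notMem h𝓕 hr hq i hz𝓕 hy
  have hq1 : 1 < q := by lia
  rw [hg.opp_mulVec, mulVec_smul, relMatrix_opp_mulVec_one, ← S.spectralBound_mul_pow hq1]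
    at hconst
  refine mul_left_cancel₀ (S.spectralBound_pos hq1).ne' ?_
  simp only [Pi.smul_apply, Pi.one_apply, smul_eq_mul, mul_one] at hconst
  linarith

end IsPanelDecomposition

theorem IsRatioSharpEKR.exists_forall_adj_mem_iff [Nonempty ι] (h𝓕 : S.IsRatioSharpEKR 𝓕)
    (hr : 0 < r) (hq : 2 * (S.word.length + 1) < q) :
    ∃ s, ∀ j, j ≠ s → ∀ x y, S.adj j x y → (x ∈ 𝓕 ↔ y ∈ 𝓕) := by
  by_cases hout : ∀ x, x ∈ 𝓕
  · exact ⟨Classical.arbitrary ι, fun _ _ x y _ => iff_of_true (hout x) (hout y)⟩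
  push Not at hout
  obtain ⟨x₀, hx₀⟩ := hout
  obtain ⟨g, hg⟩ := h𝓕.exists_isPanelDecomposition (by lia) hr
  obtain ⟨s, hs⟩ := hg.exists_ne_zero hx₀
  have hmem (j : ι) (hj : j ≠ s) (x y : X) (hxy : S.adj j x y) (hx : x ∈ 𝓕) : y ∈ 𝓕 := by
    by_contra hy
    have heq := hg.eq_of_adj s j hj x y hxy
    rw [hg.eq_neg_pow_mul h𝓕 hr hq s hx hx₀, hg.eq_of_notMem h𝓕 hr hq s hy hx₀] at heq
    have hmul : ((q : ℝ) ^ r + 1) * g s x₀ = 0 := by linarith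
    exact hs ((mul_eq_zero.1 hmul).resolve_left (by positivity))
  exact ⟨s, fun j hj x y hxy => ⟨hmem j hj x y hxy, hmem j hj y x ((S.adj j).symm hxy)⟩⟩

end OppositionSystem

section Subspace

variable {K V V' : Type*} [DivisionRing K] [AddCommGroup V] [Module K V] [AddCommGroup V']
  [Module K V']

theorem sup_inf_eq_of_le_of_le_sup {W X X' : Submodule K V} (hX : X' ≤ X) (hXW : X ≤ X' ⊔ W) :
    X' ⊔ X ⊓ W = X := by
  rw [inf_comm, ← sup_inf_assoc_of_le W hX, inf_eq_right.2 hXW]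

theorem finrank_sup_of_inf_eq_bot [FiniteDimensional K V] {U W : Submodule K V}
    (h : U ⊓ W = ⊥) : finrank K ↥(U ⊔ W) = finrank K U + finrank K W := by
  rw [← Submodule.finrank_sup_add_finrank_inf_eq, h, finrank_bot, add_zero]

theorem finrank_comap_of_surjective [FiniteDimensional K V] {f : V →ₗ[K] V'}
    (hf : Function.Surjective f) (L : Submodule K V') :
    finrank K (L.comap f) = finrank K L + finrank K (LinearMap.ker f) := by
  have hker : LinearMap.ker f ≤ L.comap f := Submodule.comap_mono bot_le
  rw [← LinearMap.finrank_range_add_finrank_ker (f.domRestrict (L.comap f)),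
    LinearMap.range_domRestrict, LinearMap.ker_domRestrict,
    Submodule.map_comap_eq_of_surjective hf, (Submodule.comapSubtypeEquivOfLe hker).finrank_eq]

theorem ncard_setOf_le_finrank_eq_add_one [Finite K] [FiniteDimensional K V] {U : Submodule K V}
    (hU : finrank K V = finrank K U + 2) :
    {Y : Submodule K V | U ≤ Y ∧ finrank K Y = finrank K U + 1}.ncard = Nat.card K + 1 := by
  have hquot : finrank K (V ⧸ U) = 2 := by
    have := U.finrank_quotient_add_finrank
    lia
  have himage : {Y | U ≤ Y ∧ finrank K Y = finrank K U + 1} =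
      Submodule.comap U.mkQ '' {L | finrank K L = 1} := by
    ext Y
    constructor
    · rintro ⟨hUY, hY⟩
      have hcomap : (Y.map U.mkQ).comap U.mkQ = Y := by
        rw [Submodule.comap_map_mkQ, sup_eq_right.2 hUY]
      have hfinrank := finrank_comap_of_surjective U.mkQ_surjective (Y.map U.mkQ)
      rw [hcomap, U.ker_mkQ, hY, add_comm, add_right_cancel_iff] at hfinrank
      exact ⟨_, hfinrank.symm, hcomap⟩
    · rintro ⟨L, hL, rfl⟩
      exact ⟨U.le_comap_mkQ L, by
        rw [finrank_comap_of_surjective U.mkQ_surjective, U.ker_mkQ, hL, add_comm]⟩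
  rw [himage, Set.ncard_image_of_injective _
    (Submodule.comap_injective_of_surjective U.mkQ_surjective),
    ← Projectivization.card_of_finrank_two K _ hquot,
    Nat.card_congr (Projectivization.equivSubmodule K (V ⧸ U))]
  rfl

theorem ncard_setOf_le_le_finrank_eq_add_one [Finite K] {U W : Submodule K V} (hUW : U ≤ W)
    (hW : finrank K W = finrank K U + 2) :
    {Y : Submodule K V | U ≤ Y ∧ Y ≤ W ∧ finrank K Y = finrank K U + 1}.ncard =
      Nat.card K + 1 := by
  have : FiniteDimensional K W := .of_finrank_pos (by lia)
  have hU : finrank K (U.comap W.subtype) = finrank K U :=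
    (Submodule.comapSubtypeEquivOfLe hUW).finrank_eq
  have himage : {Y | U ≤ Y ∧ Y ≤ W ∧ finrank K Y = finrank K U + 1} =
      Submodule.map W.subtype ''
        {Y | U.comap W.subtype ≤ Y ∧ finrank K Y = finrank K (U.comap W.subtype) + 1} := by
    ext Y
    constructor
    · rintro ⟨hUY, hYW, hY⟩
      refine ⟨Y.comap W.subtype, ⟨Submodule.comap_mono hUY, ?_⟩, ?_⟩
      · rw [(Submodule.comapSubtypeEquivOfLe hYW).finrank_eq, hU, hY]
      · rw [Submodule.map_comap_subtype, inf_eq_right.2 hYW]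
    · rintro ⟨Z, ⟨hUZ, hZ⟩, rfl⟩
      refine ⟨?_, Submodule.map_subtype_le _ _, ?_⟩
      · rw [← inf_eq_right.2 hUW, ← Submodule.map_comap_subtype]
        exact Submodule.map_mono hUZ
      · rw [Submodule.finrank_map_subtype_eq, hZ, hU]
  rw [himage, Set.ncard_image_of_injective _
    (Submodule.map_injective_of_injective W.injective_subtype),
    ncard_setOf_le_finrank_eq_add_one (hW.trans (by rw [hU]))]

theorem inf_eq_bot_iff_ne_sup [FiniteDimensional K V] {U W X Y : Submodule K V}
    (hXW : finrank K ↥(X ⊓ W) = 1) (hXU : X ⊓ U = ⊥) (hUY : U ≤ Y) (hYW : Y ≤ W)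
    (hY : finrank K Y = finrank K U + 1) : X ⊓ Y = ⊥ ↔ Y ≠ U ⊔ X ⊓ W := by
  have hatom : IsAtom (X ⊓ W) := Submodule.isAtom_iff_finrank_eq_one.2 hXW
  have hle : X ⊓ Y ≤ X ⊓ W := inf_le_inf_left X hYW
  constructor
  · rintro hXY rfl
    exact hatom.ne_bot (eq_bot_iff.2 (hXY ▸ le_inf inf_le_left le_sup_right))
  · contrapose!
    intro hXY
    have hline : X ⊓ W ≤ Y := by
      rw [← hatom.le_iff_eq hXY |>.1 hle]
      exact inf_le_right
    have hdisj : U ⊓ (X ⊓ W) = ⊥ :=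
      eq_bot_iff.2 (hXU ▸ le_inf (inf_le_right.trans inf_le_left) inf_le_left)
    refine (Submodule.eq_of_le_of_finrank_eq (sup_le hUY hline) ?_).symm
    rw [finrank_sup_of_inf_eq_bot hdisj, hXW, hY]

end Subspace

section Symplectic

variable {F V : Type} [Field F] [AddCommGroup V] [Module F V]

/-- The alternating form `B` is nondegenerate on a space of dimension `2 * n`, so that its totally
isotropic subspaces form the symplectic polar space of rank `n`. -/
structure IsSymplectic (B : V →ₗ[F] V →ₗ[F] F) (n : ℕ) : Prop where
  isAlt : IsAltForm B
  nondeg : NondegForm B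
  finrank_eq : finrank F V = 2 * n

variable {B : V →ₗ[F] V →ₗ[F] F} {n : ℕ} {U W Y : Submodule F V}

theorem bperp_eq_orthogonal (W : Submodule F V) :
    bperp B W = LinearMap.BilinForm.orthogonal B W := by
  ext x
  simp [bperp, LinearMap.BilinForm.mem_orthogonal_iff]

theorem bperp_anti (hUW : U ≤ W) : bperp B W ≤ bperp B U := by
  simpa only [bperp_eq_orthogonal] using LinearMap.BilinForm.orthogonal_le hUW

theorem bperp_bot : bperp B (⊥ : Submodule F V) = ⊤ := by
  rw [bperp_eq_orthogonal, LinearMap.BilinForm.orthogonal_bot]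

theorem isTotIso_iff_le_bperp : IsTotIso B W ↔ W ≤ bperp B W := by
  simp only [bperp_eq_orthogonal]
  exact ⟨fun h x hx w hw => h w hw x hx, fun h u hu w hw => h hw u hu⟩

namespace IsSymplectic

theorem isRefl (hB : IsSymplectic B n) : LinearMap.BilinForm.IsRefl B :=
  LinearMap.IsAlt.isRefl hB.isAlt

theorem le_bperp_comm (hB : IsSymplectic B n) : U ≤ bperp B W ↔ W ≤ bperp B U := by
  suffices ∀ {U W : Submodule F V}, U ≤ bperp B W → W ≤ bperp B U from ⟨this, this⟩
  intro U W h
  have hle := LinearMap.BilinForm.orthogonal_le (B := B) h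
  simp only [bperp_eq_orthogonal] at hle ⊢
  exact (LinearMap.BilinForm.le_orthogonal_orthogonal hB.isRefl).trans hle

theorem bperp_sup (hB : IsSymplectic B n) : bperp B (U ⊔ W) = bperp B U ⊓ bperp B W :=
  eq_of_forall_le_iff fun Y => by
    rw [le_inf_iff, hB.le_bperp_comm, sup_le_iff, hB.le_bperp_comm, hB.le_bperp_comm (U := W)]

theorem nondegenerate (hB : IsSymplectic B n) : LinearMap.BilinForm.Nondegenerate B :=
  ⟨fun x hx => hB.nondeg x hx, fun x hx => hB.nondeg x fun w => hB.isRefl _ _ (hx w)⟩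

variable [FiniteDimensional F V]

theorem bperp_bperp (hB : IsSymplectic B n) (W : Submodule F V) : bperp B (bperp B W) = W := by
  rw [bperp_eq_orthogonal, bperp_eq_orthogonal,
    LinearMap.BilinForm.orthogonal_orthogonal hB.nondegenerate hB.isRefl]

theorem finrank_bperp_add_finrank (hB : IsSymplectic B n) (W : Submodule F V) :
    finrank F (bperp B W) + finrank F W = 2 * n := by
  rw [bperp_eq_orthogonal, LinearMap.BilinForm.finrank_orthogonal hB.nondegenerate,
    Nat.sub_add_cancel W.finrank_le, hB.finrank_eq]

theorem spaceOpp_symm (hB : IsSymplectic B n) (hUW : finrank F U = finrank F W)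
    (h : SpaceOpp B U W) : SpaceOpp B W U := by
  have hsup : W ⊔ bperp B U = ⊤ := Submodule.eq_top_of_disjoint _ _
    (by rw [← hUW, add_comm, hB.finrank_bperp_add_finrank, hB.finrank_eq])
    (disjoint_iff.2 h).symm
  rw [SpaceOpp, ← hB.bperp_bperp U, ← hB.bperp_sup, hsup, ← bperp_bot (B := B), hB.bperp_bperp]

theorem le_bperp_self_of_finrank_eq_add_one (hB : IsSymplectic B n) (hUY : U ≤ Y)
    (hYU : Y ≤ bperp B U) (hY : finrank F Y = finrank F U + 1) : Y ≤ bperp B Y := by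
  obtain ⟨x, hxY, hxU⟩ : ∃ x ∈ Y, x ∉ U := SetLike.not_le_iff_exists.1 fun hle => by
    have := Submodule.finrank_mono hle
    lia
  have hlt : U < U ⊔ F ∙ x := left_lt_sup.2 (by rwa [Submodule.span_singleton_le_iff_mem])
  have hxY' : F ∙ x ≤ Y := (Submodule.span_singleton_le_iff_mem _ _).2 hxY
  have heq : U ⊔ F ∙ x = Y := Submodule.eq_of_le_of_finrank_le (sup_le hUY hxY')
    (hY.trans_le (Submodule.finrank_lt_finrank_of_lt hlt))
  have hxx : F ∙ x ≤ bperp B (F ∙ x) := by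
    rw [Submodule.span_singleton_le_iff_mem, bperp_eq_orthogonal,
      LinearMap.BilinForm.orthogonal_span_singleton_eq_toLin_ker]
    exact hB.isAlt x
  have hxY'' : F ∙ x ≤ bperp B Y := by
    rw [← heq, hB.bperp_sup]
    exact le_inf (hxY'.trans hYU) hxx
  conv_rhs => rw [← heq]
  rw [hB.bperp_sup]
  exact le_inf hYU (hB.le_bperp_comm.1 hxY'')

end IsSymplectic

end Symplectic

/-- A maximal flag of totally isotropic subspaces. -/
abbrev Chamber {F V : Type} [Field F] [AddCommGroup V] [Module F V] (B : V →ₗ[F] V →ₗ[F] F)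
    (n : ℕ) :=
  SFlag B (Finset.Icc 1 n)

namespace Chamber

variable {F V : Type} [Field F] [AddCommGroup V] [Module F V] {B : V →ₗ[F] V →ₗ[F] F} {n : ℕ}

theorem space_zero (C : Chamber B n) : C.space 0 = ⊥ := C.eq_bot 0 (by simp)

theorem ext_of_le {C D : Chamber B n} (h : ∀ i ≤ n, C.space i = D.space i) : C = D := by
  have hspace : C.space = D.space := by
    funext i
    by_cases hi : i ∈ Finset.Icc 1 n
    · exact h i (Finset.mem_Icc.1 hi).2
    · rw [C.eq_bot i hi, D.eq_bot i hi]
  cases C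
  cases D
  simp_all

theorem finrank_space (C : Chamber B n) {i : ℕ} (hi : i ≤ n) : finrank F (C.space i) = i := by
  rcases i.eq_zero_or_pos with rfl | hi0
  · rw [C.space_zero, finrank_bot]
  · exact C.finrank_eq i (Finset.mem_Icc.2 ⟨hi0, hi⟩)

theorem space_mono (C : Chamber B n) {i j : ℕ} (hij : i ≤ j) (hj : j ≤ n) :
    C.space i ≤ C.space j := by
  rcases i.eq_zero_or_pos with rfl | hi
  · exact C.space_zero.trans_le bot_le
  · exact C.mono i (Finset.mem_Icc.2 ⟨hi, hij.trans hj⟩) j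
      (Finset.mem_Icc.2 ⟨hi.trans_le hij, hj⟩) hij

theorem space_le_bperp_space (C : Chamber B n) {i j : ℕ} (hi : i ≤ n) (hj : j ≤ n) :
    C.space i ≤ bperp B (C.space j) := by
  rcases n.eq_zero_or_pos with rfl | hn
  · obtain rfl := Nat.le_zero.1 hi
    exact C.space_zero.trans_le bot_le
  · have hiso := isTotIso_iff_le_bperp.1 (C.isotropic n (Finset.mem_Icc.2 ⟨hn, le_rfl⟩))
    exact (C.space_mono hi le_rfl).trans (hiso.trans (bperp_anti (C.space_mono hj le_rfl)))

theorem finite [Finite V] : Finite (Chamber B n) :=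
  Finite.of_injective (fun C (i : Fin (n + 1)) => C.space i) fun _ _ hCD =>
    ext_of_le fun i hi => congrFun hCD ⟨i, Nat.lt_succ_of_le hi⟩

/-- The full flag of `V` that extends a chamber by the orthogonal complements of its members. -/
noncomputable def full (C : Chamber B n) (j : ℕ) : Submodule F V :=
  if j ≤ n then C.space j else bperp B (C.space (2 * n - j))

theorem full_of_le (C : Chamber B n) {j : ℕ} (hj : j ≤ n) : C.full j = C.space j := if_pos hj

/-- Two chambers are adjacent of type `i` if they differ at most in the member of dimension `i`. -/
def adj (i : ℕ) : Setoid (Chamber B n) where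
  r C D := ∀ j ≤ n, j ≠ i → C.space j = D.space j
  iseqv := ⟨fun _ _ _ _ => rfl, fun h j hjn hj => (h j hjn hj).symm,
    fun h h' j hjn hj => (h j hjn hj).trans (h' j hjn hj)⟩

theorem eq_of_adj {i : ℕ} {C D : Chamber B n} (h : adj i C D) (hi : C.space i = D.space i) :
    C = D :=
  ext_of_le fun j hj => (eq_or_ne j i).elim (fun hji => hji ▸ hi) (h j hj)

theorem full_add_two_eq_of_adj {i : ℕ} {C D : Chamber B n} (h : adj (i + 1) C D) (hi : i < n) :
    C.full (i + 2) = D.full (i + 2) := by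
  rw [full, full]
  split_ifs with hin
  · exact h _ hin (by lia)
  · rw [h _ (by lia) (by lia)]

variable [FiniteDimensional F V]

theorem bperp_space_rank (hB : IsSymplectic B n) (C : Chamber B n) :
    bperp B (C.space n) = C.space n := by
  refine (Submodule.eq_of_le_of_finrank_eq (C.space_le_bperp_space le_rfl le_rfl) ?_).symm
  have := hB.finrank_bperp_add_finrank (C.space n)
  rw [C.finrank_space le_rfl] at this ⊢
  lia

theorem full_of_ge (hB : IsSymplectic B n) (C : Chamber B n) {j : ℕ} (hj : n ≤ j) :
    C.full j = bperp B (C.space (2 * n - j)) := by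
  rcases hj.eq_or_lt with rfl | hj
  · rw [C.full_of_le le_rfl, two_mul, Nat.add_sub_cancel, C.bperp_space_rank hB]
  · exact if_neg hj.not_ge

theorem finrank_full (hB : IsSymplectic B n) (C : Chamber B n) {j : ℕ} (hj : j ≤ 2 * n) :
    finrank F (C.full j) = j := by
  rcases le_total j n with hjn | hjn
  · rw [C.full_of_le hjn, C.finrank_space hjn]
  · have := hB.finrank_bperp_add_finrank (C.space (2 * n - j))
    rw [C.finrank_space (by lia), ← C.full_of_ge hB hjn] at this
    lia

theorem full_mono (hB : IsSymplectic B n) (C : Chamber B n) : Monotone C.full := by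
  intro i j hij
  rcases le_total j n with hj | hj
  · rw [C.full_of_le hj, C.full_of_le (hij.trans hj)]
    exact C.space_mono hij hj
  · rw [C.full_of_ge hB hj]
    rcases le_total i n with hi | hi
    · rw [C.full_of_le hi]
      exact C.space_le_bperp_space hi (by lia)
    · rw [C.full_of_ge hB hi]
      exact bperp_anti (C.space_mono (by lia) (by lia))

theorem exists_space_eq {W : ℕ → Submodule F V} (hmono : ∀ i < n, W i ≤ W (i + 1))
    (hfinrank : ∀ i ≤ n, finrank F (W i) = i) (hiso : W n ≤ bperp B (W n)) :
    ∃ C : Chamber B n, ∀ i ≤ n, C.space i = W i := by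
  have hmono' {i j : ℕ} (hij : i ≤ j) (hj : j ≤ n) : W i ≤ W j := by
    induction j, hij using Nat.le_induction with
    | base => rfl
    | succ j _ ih => exact (ih (by lia)).trans (hmono j (by lia))
  have hzero : W 0 = ⊥ := Submodule.finrank_eq_zero.1 (hfinrank 0 n.zero_le)
  refine ⟨⟨fun i => if i ∈ Finset.Icc 1 n then W i else ⊥, fun i hi => ?_, fun i hi => ?_,
    fun i hi j hj hij => ?_, fun i hi => if_neg hi⟩, fun i hi => ?_⟩
  · rw [if_pos hi, isTotIso_iff_le_bperp]
    have hle := hmono' (Finset.mem_Icc.1 hi).2 le_rfl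
    exact hle.trans (hiso.trans (bperp_anti hle))
  · rw [if_pos hi]
    exact hfinrank i (Finset.mem_Icc.1 hi).2
  · rw [if_pos hi, if_pos hj]
    exact hmono' hij (Finset.mem_Icc.1 hj).2
  · rcases i.eq_zero_or_pos with rfl | hi0
    · simp [hzero]
    · exact if_pos (Finset.mem_Icc.2 ⟨hi0, hi⟩)

theorem exists_adj_space_eq (hB : IsSymplectic B n) (C : Chamber B n) {i : ℕ} (hi : i < n)
    {Y : Submodule F V} (hCY : C.space i ≤ Y) (hYC : Y ≤ C.full (i + 2))
    (hY : finrank F Y = i + 1) : ∃ D : Chamber B n, adj (i + 1) C D ∧ D.space (i + 1) = Y := by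
  set W := Function.update C.space (i + 1) Y
  have hW : W (i + 1) = Y := Function.update_self _ _ _
  have hW' {j : ℕ} (hj : j ≠ i + 1) : W j = C.space j := Function.update_of_ne hj _ _
  obtain ⟨D, hD⟩ : ∃ D : Chamber B n, ∀ j ≤ n, D.space j = W j := by
    refine exists_space_eq (fun j hj => ?_) (fun j hj => ?_) ?_
    · rcases eq_or_ne j (i + 1) with rfl | hji
      · rwa [hW, hW' (by lia), ← C.full_of_le (by lia)]
      · rw [hW' hji]
        rcases eq_or_ne j i with rfl | hji'
        · rwa [hW]
        · rw [hW' (by lia)]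
          exact C.space_mono j.le_succ hj
    · rcases eq_or_ne j (i + 1) with rfl | hji
      · rw [hW, hY]
      · rw [hW' hji, C.finrank_space hj]
    · rcases eq_or_ne n (i + 1) with rfl | hni
      · rw [C.full_of_ge hB (by lia), show 2 * (i + 1) - (i + 2) = i by lia] at hYC
        rw [hW]
        exact hB.le_bperp_self_of_finrank_eq_add_one hCY hYC
          (by rw [hY, C.finrank_space (by lia)])
      · rw [hW' hni]
        exact C.space_le_bperp_space le_rfl le_rfl
  exact ⟨D, fun j hj hji => by rw [hD j hj, hW' hji], by rw [hD _ hi, hW]⟩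

end Chamber

namespace Chamber

variable {F V : Type} [Field F] [AddCommGroup V] [Module F V] {B : V →ₗ[F] V →ₗ[F] F} {n : ℕ}

theorem flagOpp_iff {C D : Chamber B n} :
    FlagOpp C D ↔ ∀ j ≤ n, SpaceOpp B (C.space j) (D.space j) := by
  refine ⟨fun h j hj => ?_, fun h j hj => h j (Finset.mem_Icc.1 hj).2⟩
  rcases j.eq_zero_or_pos with rfl | hj0
  · rw [SpaceOpp, D.space_zero, inf_bot_eq]
  · exact h j (Finset.mem_Icc.2 ⟨hj0, hj⟩)

/-- The members of `C` and `D` of dimension different from `i` are opposite, that is, the panels of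
type `i` of `C` and `D` are opposite. -/
def PanelOpp (i : ℕ) (C D : Chamber B n) : Prop :=
  ∀ j ≤ n, j ≠ i → SpaceOpp B (C.space j) (D.space j)

theorem PanelOpp.of_adj {i : ℕ} {C D E : Chamber B n} (h : PanelOpp i C D) (hDE : adj i D E) :
    PanelOpp i C E :=
  fun j hj hji => by simpa only [hDE j hj hji] using h j hj hji

theorem panelOpp_of_flagOpp {C D : Chamber B n} (h : FlagOpp C D) (i : ℕ) : PanelOpp i C D :=
  fun j hj _ => flagOpp_iff.1 h j hj

theorem PanelOpp.flagOpp_iff {i : ℕ} {C D : Chamber B n} (h : PanelOpp i C D) (hi : i ≤ n) :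
    FlagOpp C D ↔ SpaceOpp B (C.space i) (D.space i) :=
  Chamber.flagOpp_iff.trans ⟨fun h' => h' i hi, fun h' j hj =>
    (eq_or_ne j i).elim (fun hji => hji ▸ h') (h j hj)⟩

variable [FiniteDimensional F V] {i : ℕ}

theorem PanelOpp.symm (hB : IsSymplectic B n) {C D : Chamber B n} (h : PanelOpp i C D) :
    PanelOpp i D C :=
  fun j hj hji => hB.spaceOpp_symm (by rw [C.finrank_space hj, D.finrank_space hj]) (h j hj hji)

theorem flagOpp_symm (hB : IsSymplectic B n) {C D : Chamber B n} (h : FlagOpp C D) :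
    FlagOpp D C :=
  flagOpp_iff.2 fun j hj =>
    hB.spaceOpp_symm (by rw [C.finrank_space hj, D.finrank_space hj]) (flagOpp_iff.1 h j hj)

theorem image_space_panel (hB : IsSymplectic B n) (C : Chamber B n) (hi : i < n) :
    (fun D : Chamber B n => D.space (i + 1)) '' {D | adj (i + 1) C D} =
      {Y | C.space i ≤ Y ∧ Y ≤ C.full (i + 2) ∧ finrank F Y = finrank F (C.space i) + 1} := by
  rw [C.finrank_space hi.le]
  ext Y
  constructor
  · rintro ⟨D, hCD, rfl⟩
    rw [hCD i hi.le (by lia), full_add_two_eq_of_adj hCD hi]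
    refine ⟨D.space_mono i.le_succ hi, ?_, D.finrank_space hi⟩
    exact (D.full_of_le hi).symm.trans_le (D.full_mono hB (by lia))
  · rintro ⟨hCY, hYC, hY⟩
    exact C.exists_adj_space_eq hB hi hCY hYC hY

theorem ncard_panel [Finite F] (hB : IsSymplectic B n) (C : Chamber B n) (hi : i < n) :
    {D : Chamber B n | adj (i + 1) C D}.ncard = Nat.card F + 1 := by
  have hinj : Set.InjOn (fun D : Chamber B n => D.space (i + 1)) {D | adj (i + 1) C D} :=
    fun D hD E hE => eq_of_adj ((adj (i + 1)).trans ((adj (i + 1)).symm hD) hE)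
  have hle : C.space i ≤ C.full (i + 2) := by
    rw [← C.full_of_le hi.le]
    exact C.full_mono hB (by lia)
  rw [← hinj.ncard_image, C.image_space_panel hB hi,
    ncard_setOf_le_le_finrank_eq_add_one hle
      (by rw [C.finrank_full hB (by lia), C.finrank_space hi.le])]

theorem PanelOpp.spaceOpp_full_add_two (hB : IsSymplectic B n) {C D : Chamber B n}
    (h : PanelOpp (i + 1) C D) (hi : i < n) : SpaceOpp B (C.full (i + 2)) (D.full (i + 2)) := by
  rcases le_or_gt (i + 2) n with hin | hin
  · rw [C.full_of_le hin, D.full_of_le hin]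
    exact h _ hin (by lia)
  · rw [C.full_of_ge hB hin.le, D.full_of_ge hB hin.le, SpaceOpp, hB.bperp_bperp, inf_comm]
    exact h.symm hB _ (by lia) (by lia)

theorem PanelOpp.finrank_bperp_inf_full (hB : IsSymplectic B n) {C D : Chamber B n}
    (h : PanelOpp (i + 1) C D) (hi : i < n) :
    finrank F ↥(bperp B (C.space (i + 1)) ⊓ D.full (i + 2)) = 1 := by
  have hC := hB.finrank_bperp_add_finrank (C.full (i + 2))
  have hC' := hB.finrank_bperp_add_finrank (C.space (i + 1))
  rw [C.finrank_full hB (by lia)] at hC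
  rw [C.finrank_space hi] at hC'
  have hopp := h.spaceOpp_full_add_two hB hi
  have hsup : bperp B (C.full (i + 2)) ⊔ D.full (i + 2) = ⊤ :=
    Submodule.eq_top_of_disjoint _ _
      (by rw [D.finrank_full hB (by lia), hC, hB.finrank_eq]) (disjoint_iff.2 hopp)
  have hle : bperp B (C.full (i + 2)) ≤ bperp B (C.space (i + 1)) := by
    rw [← C.full_of_le hi]
    exact bperp_anti (C.full_mono hB (by lia))
  have hdecomp := sup_inf_eq_of_le_of_le_sup hle (hsup ▸ le_top)
  have hdisj : bperp B (C.full (i + 2)) ⊓ (bperp B (C.space (i + 1)) ⊓ D.full (i + 2)) = ⊥ :=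
    eq_bot_iff.2 ((inf_le_inf_left _ inf_le_right).trans_eq hopp)
  have hfinrank := finrank_sup_of_inf_eq_bot hdisj
  rw [hdecomp] at hfinrank
  lia

theorem PanelOpp.exists_gate (hB : IsSymplectic B n) {C D : Chamber B n}
    (h : PanelOpp (i + 1) C D) (hi : i < n) :
    ∃ G, adj (i + 1) D G ∧ ∀ E, adj (i + 1) D E → (FlagOpp C E ↔ E ≠ G) := by
  have hdisj : bperp B (C.space (i + 1)) ⊓ D.space i = ⊥ :=
    eq_bot_iff.2 ((inf_le_inf_right _ (bperp_anti (C.space_mono i.le_succ hi))).trans_eq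
      (h i hi.le (by lia)))
  have hline := h.finrank_bperp_inf_full hB hi
  have hsup : D.space i ⊔ bperp B (C.space (i + 1)) ⊓ D.full (i + 2) ∈
      (fun E : Chamber B n => E.space (i + 1)) '' {E | adj (i + 1) D E} := by
    rw [D.image_space_panel hB hi]
    refine ⟨le_sup_left, sup_le ?_ inf_le_right, ?_⟩
    · exact (D.full_of_le hi.le).symm.trans_le (D.full_mono hB (by lia))
    · rw [finrank_sup_of_inf_eq_bot, hline]
      exact eq_bot_iff.2 (hdisj ▸ le_inf (inf_le_right.trans inf_le_left) inf_le_left)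
  obtain ⟨G, hDG, hG⟩ := hsup
  refine ⟨G, hDG, fun E hDE => ?_⟩
  obtain ⟨hDE', hED, hE⟩ := (D.image_space_panel hB hi).subset ⟨E, hDE, rfl⟩
  rw [(h.of_adj hDE).flagOpp_iff hi, SpaceOpp,
    inf_eq_bot_iff_ne_sup hline hdisj hDE' hED hE, ← hG, not_iff_not]
  exact ⟨eq_of_adj ((adj (i + 1)).trans ((adj (i + 1)).symm hDE) hDG), fun h => h ▸ rfl⟩

theorem PanelOpp.exists_flagOpp [Finite F] (hB : IsSymplectic B n) {C D : Chamber B n}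
    (h : PanelOpp (i + 1) C D) (hi : i < n) : ∃ E, adj (i + 1) D E ∧ FlagOpp C E := by
  obtain ⟨G, -, hgate⟩ := h.exists_gate hB hi
  have hcard : 1 < {E | adj (i + 1) D E}.ncard := by
    rw [D.ncard_panel hB hi]
    exact Nat.lt_add_of_pos_left Finite.card_pos
  obtain ⟨E, hE, hne⟩ := Set.exists_ne_of_one_lt_ncard hcard G
  exact ⟨E, hE, (hgate E hE).2 hne⟩

theorem exists_adj_flagOpp_of_flagOpp_adj [Finite F] (hB : IsSymplectic B n)
    {C D D' : Chamber B n} (h : FlagOpp C D') (hD : adj (i + 1) D' D) (hi : i < n) :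
    ∃ C', adj (i + 1) C C' ∧ FlagOpp C' D := by
  obtain ⟨C', hC', hopp⟩ :=
    (((panelOpp_of_flagOpp h (i + 1)).of_adj hD).symm hB).exists_flagOpp hB hi
  exact ⟨C', hC', flagOpp_symm hB hopp⟩

end Chamber

namespace Chamber

variable {F V : Type} [Field F] [AddCommGroup V] [Module F V] {B : V →ₗ[F] V →ₗ[F] F} {n : ℕ}

/-- `D` is at Weyl distance `s₁ s₂ ⋯ s_j` from `C`, where `s₁, …, s_n` are the simple reflections of
the Weyl group of type `C_n`. -/
def PartialRound (j : ℕ) (C D : Chamber B n) : Prop :=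
  (∀ i ≤ n, j < i → C.space i = D.space i) ∧
    (∀ i ≤ j, i < n → D.space i ≤ C.space (i + 1)) ∧ C.space 1 ⊓ D.space j = ⊥

/-- `D` is at Weyl distance `c` from `C`, where `c = s₁ s₂ ⋯ s_n` is the product of the simple
reflections of the Weyl group of type `C_n`. -/
def Round (C D : Chamber B n) : Prop :=
  (∀ i < n, D.space i ≤ C.space (i + 1)) ∧ C.space 1 ⊓ D.space n = ⊥

/-- `D` is at Weyl distance `c ^ k` from `C`, where `k ≤ n` and `c = s₁ s₂ ⋯ s_n` is the product of
the simple reflections of the Weyl group of type `C_n`. -/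
def RoundPow (k : ℕ) (C D : Chamber B n) : Prop :=
  (∀ i, i + k ≤ n → D.space i ≤ C.space (i + k)) ∧
    ∀ m j, m + k = n → j ≤ k → bperp B (C.space j) ⊓ D.space (m + j) ≤ D.space m

theorem partialRound_zero : PartialRound (B := B) (n := n) 0 = Eq := by
  funext C D
  refine propext ⟨fun h => ext_of_le fun i hi => ?_, ?_⟩
  · rcases i.eq_zero_or_pos with rfl | hi0
    · rw [C.space_zero, D.space_zero]
    · exact h.1 i hi hi0
  · rintro rfl
    refine ⟨fun _ _ _ => rfl, fun i _ hin => C.space_mono i.le_succ hin, ?_⟩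
    rw [C.space_zero, inf_bot_eq]

theorem partialRound_rank : PartialRound (B := B) (n := n) n = Round := by
  funext C D
  exact propext ⟨fun h => ⟨fun i hi => h.2.1 i hi.le hi, h.2.2⟩,
    fun h => ⟨fun i hi hin => absurd hi hin.not_ge, fun i _ hi => h.1 i hi, h.2⟩⟩

theorem roundPow_rank : RoundPow (B := B) (n := n) n = FlagOpp := by
  funext C D
  rw [eq_iff_iff, flagOpp_iff]
  constructor
  · intro h j hj
    have := h.2 0 j (zero_add n) hj
    rwa [zero_add, D.space_zero, le_bot_iff] at this
  · refine fun h => ⟨fun i hi => ?_, fun m j hm hj => ?_⟩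
    · obtain rfl : i = 0 := by lia
      exact D.space_zero.trans_le bot_le
    · obtain rfl : m = 0 := by lia
      rw [zero_add]
      exact (h j hj).trans_le bot_le

theorem RoundPow.space_one_le {k : ℕ} {C D : Chamber B n} (h : RoundPow k C D) (hk : k < n) :
    D.space 1 ≤ C.space (k + 1) := by
  rw [add_comm]
  exact h.1 1 (by lia)

theorem space_one_inf_eq_bot_iff {C : Chamber B n} (hn : 1 ≤ n) {W : Submodule F V} :
    C.space 1 ⊓ W = ⊥ ↔ ¬ C.space 1 ≤ W :=
  disjoint_iff.symm.trans (IsAtom.not_le_iff_disjoint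
    (Submodule.isAtom_iff_finrank_eq_one.2 (C.finrank_space hn))).symm

section FiniteDimensional

variable [FiniteDimensional F V]

theorem sup_space_one {C D : Chamber B n} {j : ℕ} (hj : j < n) (hle : D.space j ≤ C.space (j + 1))
    (hbot : C.space 1 ⊓ D.space j = ⊥) : D.space j ⊔ C.space 1 = C.space (j + 1) := by
  refine Submodule.eq_of_le_of_finrank_eq (sup_le hle (C.space_mono (by lia) hj)) ?_
  rw [finrank_sup_of_inf_eq_bot (inf_comm (C.space 1) _ ▸ hbot), D.finrank_space hj.le,
    C.finrank_space (by lia), C.finrank_space hj]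

theorem roundPow_zero : RoundPow (B := B) (n := n) 0 = Eq := by
  funext C D
  refine propext ⟨fun h => ext_of_le fun i hi => ?_, ?_⟩
  · exact (Submodule.eq_of_le_of_finrank_eq (h.1 i hi)
      (by rw [D.finrank_space hi, add_zero, C.finrank_space hi])).symm
  · rintro rfl
    refine ⟨fun _ _ => le_rfl, fun m j _ hj => ?_⟩
    obtain rfl := Nat.le_zero.1 hj
    exact inf_le_right

theorem PartialRound.step {j : ℕ} (hj : j < n) {C C' D : Chamber B n} (h : PartialRound j C C')
    (hadj : adj (j + 1) C' D) (hne : C' ≠ D) : PartialRound (j + 1) C D := by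
  obtain ⟨heq, hle, hbot⟩ := h
  refine ⟨fun i hi hji => (heq i hi (by lia)).trans (hadj i hi (by lia)), fun i hi hin => ?_, ?_⟩
  · rcases hi.eq_or_lt with rfl | hij
    · rw [heq _ hin (by lia), hadj _ hin (by lia)]
      exact D.space_mono (Nat.le_succ _) hin
    · rw [← hadj i hin.le (by lia)]
      exact hle i (by lia) hin
  · rw [space_one_inf_eq_bot_iff (by lia)]
    refine fun hCD => hne (eq_of_adj hadj ?_)
    have hsup := sup_space_one hj (hle j le_rfl hj) hbot
    refine Submodule.eq_of_le_of_finrank_eq ?_ (by rw [C'.finrank_space hj, D.finrank_space hj])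
    rw [← heq _ hj j.lt_succ_self, ← hsup, hadj j hj.le (by lia)]
    exact sup_le (D.space_mono j.le_succ hj) hCD

theorem PartialRound.exists_adj (hB : IsSymplectic B n) {j : ℕ} (hj : j < n) {C D : Chamber B n}
    (h : PartialRound (j + 1) C D) :
    ∃ C', PartialRound j C C' ∧ adj (j + 1) C' D ∧ C' ≠ D := by
  obtain ⟨heq, hle, hbot⟩ := h
  have hDC : D.space j ≤ C.space (j + 1) := hle j j.le_succ hj
  have hCD : C.space (j + 1) ≤ D.full (j + 2) := by
    rcases le_or_gt (j + 2) n with hjn | hjn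
    · rw [D.full_of_le hjn, ← heq _ hjn (by lia)]
      exact C.space_mono (Nat.le_succ _) hjn
    · rw [D.full_of_ge hB hjn.le, show 2 * n - (j + 2) = j by lia, hB.le_bperp_comm]
      exact hDC.trans (C.space_le_bperp_space hj hj)
  obtain ⟨C', hadj, hC'⟩ := D.exists_adj_space_eq hB hj hDC hCD (C.finrank_space hj)
  refine ⟨C', ⟨fun i hi hji => ?_, fun i hij hi => ?_, ?_⟩, (adj _).symm hadj, ?_⟩
  · rcases eq_or_ne i (j + 1) with rfl | hne
    · exact hC'.symm
    · exact (heq i hi (by lia)).trans (hadj i hi hne)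
  · rw [← hadj i hi.le (by lia)]
    exact hle i (by lia) hi
  · rw [← hadj j hj.le (by lia)]
    exact eq_bot_iff.2 ((inf_le_inf_left _ (D.space_mono j.le_succ hj)).trans_eq hbot)
  · rintro rfl
    rw [hC', space_one_inf_eq_bot_iff (by lia)] at hbot
    exact hbot (C.space_mono (by lia) hj)

theorem relMatrix_partialRound_mul [Fintype (Chamber B n)] (hB : IsSymplectic B n) {j : ℕ}
    (hj : j < n) :
    relMatrix (PartialRound (B := B) (n := n) j) * panelMatrix (adj (j + 1)) =
      relMatrix (PartialRound (j + 1)) := by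
  refine relMatrix_mul_relMatrix (fun C C' D h h' => h.step hj h'.1 h'.2) fun C D h => ?_
  obtain ⟨C', hC', hadj⟩ := h.exists_adj hB hj
  refine ⟨C', ⟨hC', hadj⟩, fun C'' ⟨hC'', hadj'⟩ => ?_⟩
  refine eq_of_adj ((adj (j + 1)).trans hadj'.1 ((adj (j + 1)).symm hadj.1)) ?_
  rw [← hC''.1 _ hj j.lt_succ_self, hC'.1 _ hj j.lt_succ_self]

theorem list_prod_range [Fintype (Chamber B n)] (hB : IsSymplectic B n) {j : ℕ} (hj : j ≤ n) :
    ((List.range j).map fun i => panelMatrix (adj (B := B) (n := n) (i + 1))).prod =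
      relMatrix (PartialRound j) := by
  induction j with
  | zero => rw [partialRound_zero, relMatrix_eq, List.range_zero, List.map_nil, List.prod_nil]
  | succ j ih =>
    rw [List.range_succ, List.map_append, List.prod_append, ih (by lia), List.map_singleton,
      List.prod_singleton, relMatrix_partialRound_mul hB hj]

theorem Round.sup_space_one {C D : Chamber B n} (h : Round C D) {i : ℕ} (hi : i < n) :
    D.space i ⊔ C.space 1 = C.space (i + 1) :=
  Chamber.sup_space_one hi (h.1 i hi)
    (eq_bot_iff.2 ((inf_le_inf_left _ (D.space_mono hi.le le_rfl)).trans_eq h.2))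

theorem Round.space_succ_inf {C D : Chamber B n} (h : Round C D) {i j : ℕ} (hi : i < n)
    (hij : i ≤ j) (hj : j ≤ n) : C.space (i + 1) ⊓ D.space j = D.space i := by
  have hbot : C.space 1 ⊓ D.space j = ⊥ :=
    eq_bot_iff.2 ((inf_le_inf_left _ (D.space_mono hj le_rfl)).trans_eq h.2)
  rw [← h.sup_space_one hi, sup_inf_assoc_of_le _ (D.space_mono hij hj), hbot, sup_bot_eq]

theorem RoundPow.comp (hB : IsSymplectic B n) {k : ℕ} (hk : k < n) {C C' D : Chamber B n}
    (h : RoundPow k C C') (h' : Round C' D) : RoundPow (k + 1) C D := by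
  have hlow {m j : ℕ} (hm : m + (k + 1) = n) (hj : j ≤ k) :
      bperp B (C.space j) ⊓ D.space (m + j) ≤ D.space m := by
    have hle : bperp B (C.space j) ⊓ D.space (m + j) ≤ C'.space (m + 1) := by
      refine (inf_le_inf_left _ (h'.1 (m + j) (by lia))).trans ?_
      rw [add_right_comm]
      exact h.2 (m + 1) j (by lia) hj
    exact (le_inf hle inf_le_right).trans_eq (h'.space_succ_inf (by lia) (by lia) (by lia))
  refine ⟨fun i hi => ?_, fun m j hm hj => ?_⟩
  · rw [← add_assoc, add_right_comm]
    exact (h'.1 i (by lia)).trans (h.1 (i + 1) (by lia))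
  · rcases Nat.le_succ_iff.1 hj with hj | rfl
    · exact hlow hm hj
    · obtain rfl : m + k + 1 = n := hm
      have hC' : bperp B (C.space (k + 1)) ⊓ D.space (m + k + 1) ≤ C'.space (m + k + 1) := by
        rw [← C'.bperp_space_rank hB, ← h'.sup_space_one (by lia), hB.bperp_sup]
        refine le_inf (inf_le_right.trans (D.space_le_bperp_space le_rfl (by lia)))
          (inf_le_left.trans (bperp_anti (h.space_one_le hk)))
      have hD : bperp B (C.space (k + 1)) ⊓ D.space (m + k + 1) ≤ D.space (m + k) :=
        (le_inf hC' inf_le_right).trans_eq (h'.space_succ_inf (by lia) (by lia) le_rfl)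
      exact (le_inf (inf_le_left.trans (bperp_anti (C.space_mono k.le_succ (by lia)))) hD).trans
        (hlow rfl le_rfl)

theorem RoundPow.sup_space_rank (hB : IsSymplectic B n) {m k : ℕ} (hm : m + k = n)
    {C D : Chamber B n} (h : RoundPow k C D) :
    D.space n ⊔ C.space k = bperp B (D.space m) := by
  subst hm
  have hle : D.space m ≤ bperp B (C.space k) :=
    (h.1 m le_rfl).trans (C.space_le_bperp_space le_rfl (by lia))
  rw [← hB.bperp_bperp (_ ⊔ _), hB.bperp_sup, D.bperp_space_rank hB, inf_comm]
  exact congrArg _ (le_antisymm (h.2 m k rfl le_rfl) (le_inf hle (D.space_mono (by lia) le_rfl)))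

theorem RoundPow.inf_space_rank (hB : IsSymplectic B n) {k : ℕ} (hk : k ≤ n) {C D : Chamber B n}
    (h : RoundPow k C D) : C.space k ⊓ D.space n = ⊥ := by
  obtain ⟨m, rfl⟩ := Nat.exists_eq_add_of_le' hk
  have hfinrank := Submodule.finrank_sup_add_finrank_inf_eq (D.space (m + k)) (C.space k)
  have hperp := hB.finrank_bperp_add_finrank (D.space m)
  rw [h.sup_space_rank hB rfl, D.finrank_space le_rfl, C.finrank_space (by lia)] at hfinrank
  rw [D.finrank_space (by lia)] at hperp
  rw [inf_comm, ← Submodule.finrank_eq_zero (R := F)]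
  lia

theorem RoundPow.finrank_inf_bperp (hB : IsSymplectic B n) {m k : ℕ} (hm : m + (k + 1) = n)
    {C D : Chamber B n} (h : RoundPow (k + 1) C D) :
    finrank F ↥(bperp B (D.space (m + k)) ⊓ C.space (k + 1)) = 1 := by
  have hsup : D.space n ⊔ bperp B (D.space (m + k)) ⊓ C.space (k + 1) =
      bperp B (D.space (m + k)) := by
    refine sup_inf_eq_of_le_of_le_sup (D.space_le_bperp_space le_rfl (by lia)) ?_
    rw [h.sup_space_rank hB hm]
    exact bperp_anti (D.space_mono (by lia) (by lia))
  have hbot : D.space n ⊓ (bperp B (D.space (m + k)) ⊓ C.space (k + 1)) = ⊥ := by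
    rw [eq_bot_iff, ← h.inf_space_rank hB (by lia), inf_comm]
    exact inf_le_inf_right _ inf_le_right
  have hfinrank := finrank_sup_of_inf_eq_bot hbot
  have hperp := hB.finrank_bperp_add_finrank (D.space (m + k))
  rw [D.finrank_space (by lia)] at hperp
  rw [hsup, D.finrank_space le_rfl] at hfinrank
  lia

theorem RoundPow.space_one_eq (hB : IsSymplectic B n) {m k : ℕ} (hm : m + (k + 1) = n)
    {C C' D : Chamber B n} (h : RoundPow k C C') (h' : Round C' D) :
    C'.space 1 = bperp B (D.space (m + k)) ⊓ C.space (k + 1) := by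
  refine Submodule.eq_of_le_of_finrank_eq (le_inf ?_ ?_) ?_
  · exact (C'.space_le_bperp_space (by lia) (by lia)).trans (bperp_anti (h'.1 (m + k) (by lia)))
  · exact h.space_one_le (by lia)
  · rw [C'.finrank_space (by lia), (h.comp hB (by lia) h').finrank_inf_bperp hB hm]

theorem exists_space_succ_eq_sup (hB : IsSymplectic B n) {p : ℕ} (hp : p + 1 = n)
    {P : Submodule F V} {D : Chamber B n} (hPD : P ≤ bperp B (D.space p)) (hP : finrank F P = 1)
    (hbot : D.space n ⊓ P = ⊥) :
    ∃ C : Chamber B n, ∀ i < n, C.space (i + 1) = D.space i ⊔ P := by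
  have hfinrank {i : ℕ} (hi : i < n) : finrank F ↥(D.space i ⊔ P) = i + 1 := by
    rw [finrank_sup_of_inf_eq_bot, hP, D.finrank_space hi.le]
    exact eq_bot_iff.2 ((inf_le_inf_right _ (D.space_mono hi.le le_rfl)).trans_eq hbot)
  let W : ℕ → Submodule F V
    | 0 => ⊥
    | i + 1 => D.space i ⊔ P
  obtain ⟨C, hC⟩ : ∃ C : Chamber B n, ∀ i ≤ n, C.space i = W i := by
    refine exists_space_eq (fun i hi => ?_) (fun i hi => ?_) ?_
    · cases i with
      | zero => exact bot_le
      | succ i => exact sup_le_sup_right (D.space_mono i.le_succ hi.le) _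
    · cases i with
      | zero => exact finrank_bot F V
      | succ i => exact hfinrank hi
    · subst hp
      exact hB.le_bperp_self_of_finrank_eq_add_one le_sup_left
        (sup_le (D.space_le_bperp_space (by lia) (by lia)) hPD)
        (by rw [hfinrank p.lt_succ_self, D.finrank_space (by lia)])
  exact ⟨C, fun i hi => hC (i + 1) hi⟩

theorem RoundPow.exists_round (hB : IsSymplectic B n) {k : ℕ} (hk : k < n) {C D : Chamber B n}
    (h : RoundPow (k + 1) C D) : ∃ C', RoundPow k C C' ∧ Round C' D := by
  obtain ⟨m, hm⟩ : ∃ m, m + (k + 1) = n := ⟨n - (k + 1), by lia⟩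
  set P := bperp B (D.space (m + k)) ⊓ C.space (k + 1)
  have hPC : P ≤ C.space (k + 1) := inf_le_right
  have hbot : P ⊓ D.space n = ⊥ :=
    eq_bot_iff.2 ((inf_le_inf_right _ hPC).trans_eq (h.inf_space_rank hB hk))
  obtain ⟨C', hC'⟩ := exists_space_succ_eq_sup hB (p := m + k) (by lia) (inf_le_left : P ≤ _)
    (h.finrank_inf_bperp hB hm) (inf_comm P _ ▸ hbot)
  refine ⟨C', ⟨fun i hi => ?_, fun m' j hm' hj => ?_⟩, fun i hi => ?_, ?_⟩
  · cases i with
    | zero => exact C'.space_zero.trans_le bot_le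
    | succ i =>
      rw [hC' i (by lia)]
      refine sup_le ?_ (hPC.trans (C.space_mono (by lia) hi))
      rw [add_right_comm]
      exact h.1 i (by lia)
  · obtain rfl : m' = m + 1 := by lia
    rw [add_right_comm, hC' _ (by lia), hC' _ (by lia), ← inf_sup_assoc_of_le]
    · exact sup_le_sup_right (h.2 m j hm (by lia)) _
    · exact hPC.trans (C.space_le_bperp_space hk (by lia))
  · exact le_sup_left.trans_eq (hC' i hi).symm
  · have hline : C'.space 1 = P := (hC' 0 (by lia)).trans (by rw [D.space_zero, bot_sup_eq])
    rw [hline, hbot]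

theorem relMatrix_roundPow_mul [Fintype (Chamber B n)] (hB : IsSymplectic B n) {k : ℕ}
    (hk : k < n) :
    relMatrix (RoundPow (B := B) (n := n) k) * relMatrix Round = relMatrix (RoundPow (k + 1)) := by
  refine relMatrix_mul_relMatrix (fun C C' D h h' => h.comp hB hk h') fun C D h => ?_
  obtain ⟨m, hm⟩ : ∃ m, m + (k + 1) = n := ⟨n - (k + 1), by lia⟩
  obtain ⟨C', h₁, h₂⟩ := h.exists_round hB hk
  refine ⟨C', ⟨h₁, h₂⟩, fun C'' ⟨h₁', h₂'⟩ => ext_of_le fun i hi => ?_⟩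
  cases i with
  | zero => rw [C'.space_zero, C''.space_zero]
  | succ i =>
    rw [← h₂.sup_space_one hi, ← h₂'.sup_space_one hi, h₁.space_one_eq hB hm h₂,
      h₁'.space_one_eq hB hm h₂']

theorem relMatrix_round_pow [Fintype (Chamber B n)] (hB : IsSymplectic B n) {k : ℕ} (hk : k ≤ n) :
    relMatrix (Round (B := B) (n := n)) ^ k = relMatrix (RoundPow k) := by
  induction k with
  | zero => rw [pow_zero, roundPow_zero, relMatrix_eq]
  | succ k ih => rw [pow_succ, ih (by lia), relMatrix_roundPow_mul hB hk]

end FiniteDimensional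

/-- The reduced word `(s₁ s₂ ⋯ s_n)ⁿ` of the longest element of the Weyl group of type `C_n`. -/
def longestWord (n : ℕ) : List (Fin n) := (List.replicate n (List.finRange n)).flatten

theorem count_longestWord (i : Fin n) : (longestWord n).count i = n := by
  rw [longestWord, List.count_flatten, List.map_replicate, List.sum_replicate,
    List.count_eq_one_of_mem (List.nodup_finRange n) (List.mem_finRange i), smul_eq_mul, mul_one]

theorem length_longestWord (n : ℕ) : (longestWord n).length = n * n := by
  rw [longestWord, List.length_flatten, List.map_replicate, List.sum_replicate,
    List.length_finRange, smul_eq_mul]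

theorem list_prod_longestWord [FiniteDimensional F V] [Fintype (Chamber B n)]
    (hB : IsSymplectic B n) :
    ((longestWord n).map fun i : Fin n => panelMatrix (adj (B := B) (n := n) (i + 1))).prod =
      relMatrix FlagOpp := by
  have hround := list_prod_range hB le_rfl
  rw [partialRound_rank, ← List.map_coe_finRange_eq_range, List.map_map] at hround
  rw [← roundPow_rank, ← relMatrix_round_pow hB le_rfl, ← hround, longestWord, List.map_flatten,
    List.prod_flatten, List.map_replicate, List.map_replicate, List.prod_replicate]
  rfl

end Chamber

namespace Chamber

variable {F V : Type} [Field F] [AddCommGroup V] [Module F V] [FiniteDimensional F V]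
  {B : V →ₗ[F] V →ₗ[F] F} {n : ℕ}

theorem space_sup_span_singleton (C : Chamber B n) {i : ℕ} (hi : i < n) {x : V}
    (hx : x ∈ C.space (i + 1)) (hx' : x ∉ C.space i) : C.space i ⊔ F ∙ x = C.space (i + 1) := by
  refine Submodule.eq_of_le_of_finrank_eq (sup_le (C.space_mono i.le_succ hi)
    ((Submodule.span_singleton_le_iff_mem _ _).2 hx)) ?_
  rw [Submodule.finrank_sup_span_singleton hx', C.finrank_space hi.le, C.finrank_space hi]

theorem bperp_full (hB : IsSymplectic B n) (C : Chamber B n) {j : ℕ} (hj : j ≤ 2 * n) :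
    bperp B (C.full j) = C.full (2 * n - j) := by
  rcases le_total j n with hjn | hjn
  · rw [C.full_of_le hjn, C.full_of_ge hB (by lia), Nat.sub_sub_self hj]
  · rw [C.full_of_ge hB hjn, hB.bperp_bperp, C.full_of_le (by lia)]

theorem exists_adj_mem_full (hB : IsSymplectic B n) (C : Chamber B n) {t : ℕ} (ht : t + 1 < 2 * n)
    {x : V} (hx : x ∈ C.full (t + 2)) (hx' : x ∉ C.full (t + 1)) :
    ∃ i < n, (i = t ∨ i + t + 2 = 2 * n) ∧ ∃ D, adj (i + 1) C D ∧ x ∈ D.full (t + 1) := by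
  set Y := C.full t ⊔ F ∙ x
  have hxY : x ∈ Y := Submodule.mem_sup_right (Submodule.mem_span_singleton_self x)
  have hCY : C.full t ≤ Y := le_sup_left
  have hYC : Y ≤ C.full (t + 2) :=
    sup_le (C.full_mono hB (by lia)) ((Submodule.span_singleton_le_iff_mem _ _).2 hx)
  have hY : finrank F Y = t + 1 := by
    rw [Submodule.finrank_sup_span_singleton fun h => hx' (C.full_mono hB t.le_succ h),
      C.finrank_full hB (by lia)]
  rcases lt_or_ge t n with htn | htn
  · obtain ⟨D, hCD, hD⟩ := C.exists_adj_space_eq hB htn (C.full_of_le htn.le ▸ hCY) hYC hY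
    exact ⟨t, htn, Or.inl rfl, D, hCD, by rwa [D.full_of_le htn, hD]⟩
  · obtain ⟨i, hi⟩ : ∃ i, i + t + 2 = 2 * n := ⟨2 * n - (t + 2), by lia⟩
    have hCY' : C.space i ≤ bperp B Y := by
      rwa [hB.le_bperp_comm, show i = 2 * n - (t + 2) by lia, ← C.full_of_ge hB (by lia)]
    have hYC' : bperp B Y ≤ C.full (i + 2) := by
      rw [show i + 2 = 2 * n - t by lia, ← C.bperp_full hB (by lia)]
      exact bperp_anti hCY
    have hY' := hB.finrank_bperp_add_finrank Y
    obtain ⟨D, hCD, hD⟩ := C.exists_adj_space_eq hB (by lia) hCY' hYC' (by lia)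
    refine ⟨i, by lia, Or.inr hi, D, hCD, ?_⟩
    rwa [D.full_of_ge hB (by lia), show 2 * n - (t + 1) = i + 1 by lia, hD, hB.bperp_bperp]

variable {R : Setoid (Chamber B n)} {s : ℕ}

/- Walk down the full flag of `C`: as long as `x` first appears in the member of dimension
`t + 2 > i + 1`, replace the member of dimension `t + 1` by one that contains `x`. -/
theorem exists_rel_mem_space_succ (hB : IsSymplectic B n)
    (hR : ∀ j < n, j + 1 ≠ s → adj (j + 1) ≤ R) (hs : s ≤ n) {i : ℕ} (hi : i < n)
    (his : i + 1 ≠ s) {x : V} (C : Chamber B n) (hx : x ∈ bperp B (C.space i))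
    (hxs : i + 1 < s → x ∈ C.space s) :
    ∃ D, R C D ∧ (∀ j ≤ i, C.space j = D.space j) ∧ C.space s = D.space s ∧
      x ∈ D.space (i + 1) := by
  have hxtop : x ∈ C.full (2 * n) := by
    rw [C.full_of_ge hB (by lia), Nat.sub_self, C.space_zero, bperp_bot]
    trivial
  suffices ∀ m ≤ 2 * n, ∀ C : Chamber B n, x ∈ bperp B (C.space i) →
      (i + 1 < s → x ∈ C.space s) → x ∈ C.full m → ∃ D, R C D ∧ (∀ j ≤ i, C.space j = D.space j) ∧
        C.space s = D.space s ∧ x ∈ D.space (i + 1) from this _ le_rfl C hx hxs hxtop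
  intro m hm
  induction m with
  | zero =>
    intro C _ _ hxm
    exact ⟨C, R.refl C, fun _ _ => rfl, rfl, C.full_of_le hi ▸ C.full_mono hB (Nat.zero_le _) hxm⟩
  | succ m ih =>
    intro C hx hxs hxm
    rcases le_or_gt (m + 1) (i + 1) with hmi | hmi
    · exact ⟨C, R.refl C, fun _ _ => rfl, rfl, C.full_of_le hi ▸ C.full_mono hB hmi hxm⟩
    by_cases hxm' : x ∈ C.full m
    · exact ih (by lia) C hx hxs hxm'
    obtain ⟨t, rfl⟩ : ∃ t, m = t + 1 := ⟨m - 1, by lia⟩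
    obtain ⟨j, hj, hjt, D, hCD, hxD⟩ := C.exists_adj_mem_full hB (by lia) hxm hxm'
    have hti : t + 1 < 2 * n - i := by
      by_contra! hle
      rw [← C.full_of_le hi.le, C.bperp_full hB (by lia)] at hx
      exact hxm' (C.full_mono hB hle hx)
    have hjs : j + 1 ≠ s := by
      rintro rfl
      have := hxs (by lia)
      rw [← C.full_of_le hj] at this
      exact hxm' (C.full_mono hB (by lia) this)
    have hCDi {k : ℕ} (hk : k ≤ i) : C.space k = D.space k := hCD k (by lia) (by lia)
    have hCDs : C.space s = D.space s := hCD s hs hjs.symm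
    obtain ⟨E, hDE, hEi, hEs, hxE⟩ := ih (by lia) D (hCDi le_rfl ▸ hx) (hCDs ▸ hxs) hxD
    exact ⟨E, R.trans (hR j hj hjs hCD) hDE, fun k hk => (hCDi hk).trans (hEi k hk),
      hCDs.trans hEs, hxE⟩

theorem rel_of_space_eq (hB : IsSymplectic B n) (hR : ∀ j < n, j + 1 ≠ s → adj (j + 1) ≤ R)
    (hs : s ≤ n) {C D : Chamber B n} (hCD : C.space s = D.space s) : R C D := by
  have hagree (i : ℕ) (hi : i ≤ n) :
      ∃ E, R C E ∧ E.space s = D.space s ∧ ∀ j ≤ i, E.space j = D.space j := by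
    induction i with
    | zero => exact ⟨C, R.refl C, hCD, fun j hj => by
        rw [Nat.le_zero.1 hj, C.space_zero, D.space_zero]⟩
    | succ i ih =>
      obtain ⟨E, hCE, hEs, hE⟩ := ih (by lia)
      have hsucc {E' : Chamber B n} (hE' : ∀ j ≤ i, E'.space j = D.space j)
          (hE'i : E'.space (i + 1) = D.space (i + 1)) (j : ℕ) (hj : j ≤ i + 1) :
          E'.space j = D.space j :=
        (Nat.le_succ_iff.1 hj).elim (hE' j) fun hji => hji ▸ hE'i
      rcases eq_or_ne (i + 1) s with rfl | his
      · exact ⟨E, hCE, hEs, hsucc hE hEs⟩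
      obtain ⟨x, hx, hx'⟩ : ∃ x ∈ D.space (i + 1), x ∉ D.space i :=
        SetLike.not_le_iff_exists.1 fun hle => by
          have := Submodule.finrank_mono hle
          rw [D.finrank_space hi, D.finrank_space (by lia)] at this
          lia
      obtain ⟨E', hEE', hE'i, hE's, hxE'⟩ := exists_rel_mem_space_succ hB hR hs hi his E
        (hE i le_rfl ▸ D.space_le_bperp_space hi (by lia) hx)
        fun h => hEs ▸ D.space_mono h.le hs hx
      have hE' (j : ℕ) (hj : j ≤ i) : E'.space j = D.space j := (hE'i j hj).symm.trans (hE j hj)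
      refine ⟨E', R.trans hCE hEE', hE's.symm.trans hEs, hsucc hE' ?_⟩
      rw [← D.space_sup_span_singleton hi hx hx', ← hE' i le_rfl,
        E'.space_sup_span_singleton hi hxE' (hE' i le_rfl ▸ hx')]
  obtain ⟨E, hCE, -, hE⟩ := hagree n le_rfl
  rwa [← ext_of_le hE]

end Chamber

/-- The opposition system of the chambers of a symplectic polar space. The panels of type
`i : Fin n` arise by varying the subspace of dimension `i + 1`. -/
noncomputable def Chamber.oppositionSystem {F V : Type} [Field F] [Finite F] [AddCommGroup V]
    [Module F V] [FiniteDimensional F V] {B : V →ₗ[F] V →ₗ[F] F} {n : ℕ} [Fintype (Chamber B n)]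
    (hB : IsSymplectic B n) : OppositionSystem (Chamber B n) (Fin n) (Nat.card F) n where
  adj i := adj (i + 1)
  opp := FlagOpp
  word := longestWord n
  ncard_panel i C := ncard_panel hB C i.isLt
  eq_top_of_adj_le _ hR := Setoid.eq_top_iff.2 fun C D =>
    rel_of_space_eq hB (fun j hj _ => hR ⟨j, hj⟩) n.zero_le (C.space_zero.trans D.space_zero.symm)
  opp_symm _ _ h := flagOpp_symm hB h
  exists_gate i _ _ h := (panelOpp_of_flagOpp h (i + 1)).exists_gate hB i.isLt
  opp_panel_symm i _ _ _ h hD := exists_adj_flagOpp_of_flagOpp_adj hB h hD i.isLt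
  count_word := count_longestWord
  list_prod_word := list_prod_longestWord hB

theorem stmt_4_general {F V : Type} [Field F] [Finite F] [AddCommGroup V] [Module F V] {n : ℕ}
    (hn : 1 ≤ n) {B : V →ₗ[F] V →ₗ[F] F} (hB : IsSymplectic B n)
    (hq : 2 * (n * n + 1) < Nat.card F) {𝓕 : Set (Chamber B n)} (hEKR : IsEKRFlags 𝓕)
    (hcard : (𝓕.ncard : ℝ) = (Nat.card (Chamber B n) : ℝ) / ((Nat.card F : ℝ) ^ n + 1)) :
    ∃ s ∈ Finset.Icc 1 n, ∀ C ∈ 𝓕, Heavy 𝓕 s (C.space s) := by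
  have : FiniteDimensional F V := Module.finite_of_finrank_pos (by rw [hB.finrank_eq]; lia)
  have : Finite V := Module.finite_of_finite F
  have : Finite (Chamber B n) := Chamber.finite
  have : Fintype (Chamber B n) := Fintype.ofFinite _
  have : Nonempty (Fin n) := ⟨⟨0, hn⟩⟩
  have h𝓕 : (Chamber.oppositionSystem hB).IsRatioSharpEKR 𝓕 :=
    ⟨hEKR, by rw [hcard, Nat.card_eq_fintype_card]⟩
  have hlength : (Chamber.oppositionSystem hB).word.length = n * n := Chamber.length_longestWord n
  obtain ⟨s, hs⟩ := h𝓕.exists_forall_adj_mem_iff hn (by rwa [hlength])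
  refine ⟨s + 1, Finset.mem_Icc.2 ⟨by lia, s.isLt⟩, fun C hC D hDC => ?_⟩
  have hadj : ∀ j < n, j + 1 ≠ (s : ℕ) + 1 → Chamber.adj (j + 1) ≤ Setoid.ker (· ∈ 𝓕) :=
    fun j hj hjs C D hCD =>
      propext (hs ⟨j, hj⟩ (fun h => hjs (congrArg (fun i : Fin n => (i : ℕ) + 1) h)) C D hCD)
  exact (Chamber.rel_of_space_eq hB hadj s.isLt hDC : (D ∈ 𝓕) = (C ∈ 𝓕)).mpr hC

/-- For large `q`, every ratio-sharp EKR-set of chambers admits an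
`s ∈ [n]` such that the `s`-space of every chamber of the set is heavy. -/
theorem stmt_4 (n : ℕ) (hn : 3 ≤ n) :
    ∃ q₀ : ℕ, ∀ (F V : Type) [Field F] [Fintype F] [AddCommGroup V] [Module F V],
      ∀ q : ℕ, Fintype.card F = q → q₀ ≤ q →
      ∀ B : V →ₗ[F] V →ₗ[F] F, IsAltForm B → NondegForm B →
      FiniteDimensional F V → Module.finrank F V = 2 * n →
      ∀ 𝓕 : Set (SFlag B (Finset.Icc 1 n)),
        IsEKRFlags 𝓕 →
        (𝓕.ncard : ℝ) = (Nat.card (SFlag B (Finset.Icc 1 n)) : ℝ) / ((q : ℝ) ^ n + 1) →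
        ∃ s ∈ Finset.Icc 1 n, ∀ C ∈ 𝓕, Heavy 𝓕 s (SFlag.space C s) :=
  ⟨2 * (n * n + 1) + 1, fun F _ _ _ _ _ q hF hq₀ _ hB hB' _ hV _ hEKR hcard => by
    obtain rfl : Nat.card F = q := Nat.card_eq_fintype_card.trans hF
    exact stmt_4_general (by lia) ⟨hB, hB', hV⟩ hq₀ hEKR hcard⟩
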